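/- arXiv:1804.07630 — 2 statements merged into one kernel-verified Lean document; each statement's English description precedes it below -/
import Mathlib

section
/- Let Σ be a finite set with a distinguished element 0, and let X ⊆ Σ^{ℤ²} be a subshift of finite type containing the all-0 configuration 0^{ℤ²} which is block-gluing: there exists R ∈ ℕ such that whenever A, B ⊆ ℤ² are (possibly infinite) rectangles (products of intervals) with ℓ∞-distance at least R between them, and P : A → Σ, Q : B → Σ are patterns each occurring in some point of X, there exists x ∈ X with x|_A = P and x|_B = Q. Then every continuous map f : X → X commuting with the ℤ²-shift action and satisfying fⁿ(x) → 0^{ℤ²} for every x ∈ X is nilpotent, i.e. fⁿ(X) = {0^{ℤ²}} for some n ∈ ℕ. -/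
/-!
Two points of `X` can be superposed when their nonzero symbols are far apart. By the Baire category
theorem, in any shift-invariant family of points some finite pattern forces zeros at the origin from
a uniform time on. If the members of the family whose orbit reaches `0` can be superposed, such a
pattern can be inserted in their empty regions without affecting their long-term behaviour. By
compactness all orbits visit a large empty box in bounded time, so these members die in bounded
time.

For horizontally periodic points supported on a horizontal strip, zero-forcing bands inserted far
above and far below act as walls, so that the middle part lives in a finite region and has to die.
Hence horizontally periodic bands of a given period die in bounded time. For points with finite
support, a periodic row of copies of a zero-forcing word can be inserted in empty rows and dies out
by itself. So empty rows far from the support become empty again, the support stays in a bounded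
neighbourhood of its bounding box, and points with finite support die in bounded time as well.

Finally, gluing with zeros on both sides of a vertical and of a horizontal strip extends any central
box of a point of `X` to a point which, outside a larger box, lives on horizontal arms of total
thickness `2 R`. Cutting and repeating makes the arms periodic with a period that does not depend on
the box. The arms die in bounded time, and what remains has finite support.
-/

namespace PlaneShift

open Set Filter Topology Function

section Boxes

/-- The box `c + [-r, r]²`: the closed ball of radius `r` around `c` for the `ℓ∞`-norm. -/
def box (c : ℤ × ℤ) (r : ℕ) : Set (ℤ × ℤ) :=
  Icc (c.1 - r) (c.1 + r) ×ˢ Icc (c.2 - r) (c.2 + r)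

/-- The horizontal strip of height `2 b + 1` around the horizontal axis. -/
def rows (b : ℕ) : Set (ℤ × ℤ) := Prod.snd ⁻¹' Icc (-b : ℤ) b

/-- The vertical strip of width `2 b + 1` around the vertical axis. -/
def cols (b : ℕ) : Set (ℤ × ℤ) := Prod.fst ⁻¹' Icc (-b : ℤ) b

variable {u v w : ℤ × ℤ} {r s b : ℕ}

theorem mem_box : u ∈ box v r ↔
    (v.1 - r ≤ u.1 ∧ u.1 ≤ v.1 + r) ∧ v.2 - r ≤ u.2 ∧ u.2 ≤ v.2 + r := Iff.rfl

theorem mem_box_zero : u ∈ box 0 r ↔ (-r ≤ u.1 ∧ u.1 ≤ r) ∧ -r ≤ u.2 ∧ u.2 ≤ r := by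
  simp [mem_box]

theorem mem_rows : v ∈ rows b ↔ -(b : ℤ) ≤ v.2 ∧ v.2 ≤ b := Iff.rfl

theorem mem_cols : v ∈ cols b ↔ -(b : ℤ) ≤ v.1 ∧ v.1 ≤ b := Iff.rfl

theorem finite_box (v : ℤ × ℤ) (r : ℕ) : (box v r).Finite :=
  (finite_Icc _ _).prod (finite_Icc _ _)

theorem self_mem_box (v : ℤ × ℤ) (r : ℕ) : v ∈ box v r := by
  simp [mem_box]

theorem mem_box_comm : u ∈ box v r ↔ v ∈ box u r := by
  simp only [mem_box]
  omega

theorem box_subset_box (h : r ≤ s) : box v r ⊆ box v s := by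
  intro u hu
  simp only [mem_box] at hu ⊢
  omega

theorem box_subset_box_add (h : u ∈ box v r) : box u s ⊆ box v (r + s) := by
  intro w hw
  simp only [mem_box] at h hw ⊢
  omega

theorem add_mem_box_add : u + w ∈ box (v + w) r ↔ u ∈ box v r := by
  simp only [mem_box, Prod.fst_add, Prod.snd_add]
  omega

theorem rows_subset_rows (h : r ≤ s) : rows r ⊆ rows s := by
  intro u hu
  simp only [mem_rows] at hu ⊢
  omega

theorem box_zero_subset_rows (r : ℕ) : box 0 r ⊆ rows r := fun _ hu => (mem_box_zero.1 hu).2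

theorem box_zero_subset_cols (r : ℕ) : box 0 r ⊆ cols r := fun _ hu => (mem_box_zero.1 hu).1

theorem box_subset_rows_add (h : v ∈ rows b) : box v r ⊆ rows (b + r) := by
  intro w hw
  simp only [mem_box, mem_rows] at h hw ⊢
  omega

theorem exists_subset_box_zero {I : Set (ℤ × ℤ)} (hI : I.Finite) : ∃ l, I ⊆ box 0 l := by
  obtain ⟨l, hl⟩ := (hI.image fun v => max v.1.natAbs v.2.natAbs).bddAbove
  refine ⟨l, fun v hv => mem_box_zero.2 ?_⟩
  have : max v.1.natAbs v.2.natAbs ≤ l := hl ⟨v, hv, rfl⟩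
  omega

end Boxes

/-- Configurations of the plane over the alphabet `A`. -/
abbrev Config (A : Type*) := ℤ × ℤ → A

variable {A : Type*}

/-- The translate of a configuration by `-w`, so that the cell `w` is moved to the origin. -/
def shift (w : ℤ × ℤ) (x : Config A) : Config A := fun u => x (u + w)

section Shift

variable {x y : Config A} {v w : ℤ × ℤ} {r : ℕ}

@[simp]
theorem shift_apply (w : ℤ × ℤ) (x : Config A) (v : ℤ × ℤ) : shift w x v = x (v + w) := rfl

theorem eqOn_shift : EqOn (shift w x) (shift w y) (box v r) ↔ EqOn x y (box (v + w) r) := by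
  refine ⟨fun h u hu => ?_, fun h u hu => h (add_mem_box_add.2 hu)⟩
  have := @h (u - w) (by rwa [← add_mem_box_add (w := w), sub_add_cancel])
  simpa using this

end Shift

section Superposition

variable [Zero A] {u y z : Config A} {d ρ : ℕ}

open Classical in
/-- The configuration `u` written on top of `y`: the symbol `0` of `u` is transparent. -/
noncomputable def superpose (u y : Config A) : Config A := fun v => if u v = 0 then y v else u v

/-- The nonzero symbols of `u` are at distance more than `d` from the nonzero symbols of `y`. -/
def Separated (d : ℕ) (u y : Config A) : Prop := ∀ ⦃v⦄, u v ≠ 0 → EqOn y 0 (box v d)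

theorem superpose_apply_of_left {v : ℤ × ℤ} (h : u v = 0) : superpose u y v = y v := if_pos h

theorem superpose_apply_of_right {v : ℤ × ℤ} (h : y v = 0) : superpose u y v = u v := by
  by_cases hu : u v = 0 <;> simp [superpose, hu, h]

@[simp]
theorem zero_superpose (y : Config A) : superpose 0 y = y :=
  funext fun _ => superpose_apply_of_left rfl

theorem support_superpose_subset (u y : Config A) :
    support (superpose u y) ⊆ support u ∪ support y := by
  intro v hv
  by_cases hu : u v = 0
  · exact .inr (by rwa [mem_support, superpose_apply_of_left hu] at hv)
  · exact .inl hu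

theorem Separated.mono {d' : ℕ} (h : Separated d u y) (hd : d' ≤ d) : Separated d' u y :=
  fun _ hv => (h hv).mono (box_subset_box hd)

theorem separated_of_support_subset {S T : Set (ℤ × ℤ)} (hu : support u ⊆ S) (hy : support y ⊆ T)
    (h : ∀ v ∈ S, ∀ w ∈ T, w ∉ box v d) : Separated d u y :=
  fun v hv w hw => by_contra fun hyw => h v (hu hv) w (hy hyw) hw

theorem superpose_window (h : Separated (2 * ρ) u y) (v : ℤ × ℤ) :
    (EqOn (superpose u y) u (box v ρ) ∧ EqOn y 0 (box v ρ)) ∨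
      (EqOn (superpose u y) y (box v ρ) ∧ EqOn u 0 (box v ρ)) := by
  by_cases hu : EqOn u 0 (box v ρ)
  · exact .inr ⟨fun w hw => superpose_apply_of_left (hu hw), hu⟩
  · obtain ⟨w, hwv, hw⟩ : ∃ w ∈ box v ρ, u w ≠ 0 := by simpa [EqOn] using hu
    have hy : EqOn y 0 (box v ρ) :=
      (h hw).mono (two_mul ρ ▸ box_subset_box_add (mem_box_comm.1 hwv))
    exact .inl ⟨fun w hw => superpose_apply_of_right (hy hw), hy⟩

/-- `z` vanishes at every cell of `S` within distance `r` of the complement of `S`, and vice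
versa. Hence cutting `z` off outside `S` creates no window of radius `r` other than those of `z`
and the zero window. -/
def ZeroOnBoundary (r : ℕ) (S : Set (ℤ × ℤ)) (z : Config A) : Prop :=
  ∀ v ∈ S, ∀ w ∉ S, w ∈ box v r → z v = 0 ∧ z w = 0

theorem ZeroOnBoundary.eqOn_indicator {r : ℕ} {S : Set (ℤ × ℤ)} (h : ZeroOnBoundary r S z)
    {v : ℤ × ℤ} (hv : v ∈ S) : EqOn (S.indicator z) z (box v r) := by
  intro w hw
  by_cases hwS : w ∈ S
  · exact indicator_of_mem hwS z
  · rw [indicator_of_notMem hwS, (h v hv w hwS hw).2]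

theorem ZeroOnBoundary.eqOn_indicator_zero {r : ℕ} {S : Set (ℤ × ℤ)} (h : ZeroOnBoundary r S z)
    {v : ℤ × ℤ} (hv : v ∉ S) : EqOn (S.indicator z) 0 (box v r) := by
  intro w hw
  by_cases hwS : w ∈ S
  · rw [indicator_of_mem hwS, (h w hwS v hv (mem_box_comm.1 hw)).1, Pi.zero_apply]
  · exact indicator_of_notMem hwS z

theorem zeroOnBoundary_preimage_Icc {r : ℕ} {φ : ℤ × ℤ → ℤ} {s t : ℤ}
    (hφ : ∀ v, ∀ w ∈ box v r, φ v - r ≤ φ w ∧ φ w ≤ φ v + r)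
    (hs : ∀ v, |φ v - s| ≤ r → z v = 0) (ht : ∀ v, |φ v - t| ≤ r → z v = 0) :
    ZeroOnBoundary r (φ ⁻¹' Icc s t) z := by
  intro v hv w hw hwv
  have hvw := hφ v w hwv
  simp only [mem_preimage, mem_Icc] at hv hw
  rcases lt_or_ge (φ w) s with hws | hws
  · exact ⟨hs v (abs_le.2 ⟨by omega, by omega⟩), hs w (abs_le.2 ⟨by omega, by omega⟩)⟩
  · exact ⟨ht v (abs_le.2 ⟨by omega, by omega⟩), ht w (abs_le.2 ⟨by omega, by omega⟩)⟩

end Superposition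

section CellularAutomata

variable [Zero A] {X : Set (Config A)} {f g : Config A → Config A} {r s : ℕ} {u x y z : Config A}

/-- `X` is a subshift of finite type containing the zero configuration, and membership in `X` is
decided by the windows of radius `r`. -/
structure IsPointedSFT (X : Set (Config A)) (r : ℕ) : Prop where
  zero_mem : 0 ∈ X
  shift_mem : ∀ w, ∀ x ∈ X, shift w x ∈ X
  mem_of_local : ∀ x, (∀ v, ∃ y ∈ X, EqOn x y (box v r)) → x ∈ X

/-- `f` is a cellular automaton of radius `r` on the subshift of finite type `X`, and it fixes the
zero configuration. The radius `r` is also a window radius for `X`. -/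
structure IsQuiescentCA (X : Set (Config A)) (f : Config A → Config A) (r : ℕ) : Prop extends
    IsPointedSFT X r where
  mapsTo : MapsTo f X X
  map_shift : ∀ w, ∀ x ∈ X, f (shift w x) = shift w (f x)
  map_zero : f 0 = 0
  map_local : ∀ x ∈ X, ∀ y ∈ X, ∀ v, EqOn x y (box v r) → f x v = f y v

/-- Every orbit of `f` in `X` converges to `0`, cell by cell. -/
def AsymptoticallyNilpotent (X : Set (Config A)) (f : Config A → Config A) : Prop :=
  ∀ x ∈ X, ∀ v, ∀ᶠ n in atTop, f^[n] x v = 0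

namespace IsPointedSFT

theorem mono (hX : IsPointedSFT X r) (h : r ≤ s) : IsPointedSFT X s where
  zero_mem := hX.zero_mem
  shift_mem := hX.shift_mem
  mem_of_local x hx := hX.mem_of_local x fun v =>
    let ⟨y, hy, hxy⟩ := hx v
    ⟨y, hy, hxy.mono (box_subset_box h)⟩

theorem superpose_mem (hX : IsPointedSFT X r) (hu : u ∈ X) (hy : y ∈ X)
    (h : Separated (2 * r) u y) : superpose u y ∈ X := by
  refine hX.mem_of_local _ fun v => ?_
  rcases superpose_window h v with ⟨huy, -⟩ | ⟨huy, -⟩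
  exacts [⟨u, hu, huy⟩, ⟨y, hy, huy⟩]

theorem indicator_mem (hX : IsPointedSFT X r) {S : Set (ℤ × ℤ)} (hz : z ∈ X)
    (h : ZeroOnBoundary r S z) : S.indicator z ∈ X := by
  refine hX.mem_of_local _ fun v => ?_
  by_cases hv : v ∈ S
  exacts [⟨z, hz, h.eqOn_indicator hv⟩, ⟨0, hX.zero_mem, h.eqOn_indicator_zero hv⟩]

end IsPointedSFT

namespace IsQuiescentCA

theorem mono (hf : IsQuiescentCA X f r) (h : r ≤ s) : IsQuiescentCA X f s where
  __ := hf.toIsPointedSFT.mono h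
  mapsTo := hf.mapsTo
  map_shift := hf.map_shift
  map_zero := hf.map_zero
  map_local x hx y hy v hxy := hf.map_local x hx y hy v (hxy.mono (box_subset_box h))

theorem map_eqOn (hf : IsQuiescentCA X f r) (hx : x ∈ X) (hy : y ∈ X) {v : ℤ × ℤ}
    (h : EqOn x y (box v (s + r))) : EqOn (f x) (f y) (box v s) :=
  fun w hw => hf.map_local x hx y hy w (h.mono (box_subset_box_add hw))

theorem map_eq_zero (hf : IsQuiescentCA X f r) (hx : x ∈ X) {v : ℤ × ℤ}
    (h : EqOn x 0 (box v r)) : f x v = 0 := by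
  rw [hf.map_local x hx 0 hf.zero_mem v h, hf.map_zero, Pi.zero_apply]

theorem comp (hg : IsQuiescentCA X g s) (hf : IsQuiescentCA X f r) :
    IsQuiescentCA X (g ∘ f) (s + r) where
  __ := hf.toIsPointedSFT.mono (Nat.le_add_left r s)
  mapsTo := hg.mapsTo.comp hf.mapsTo
  map_shift w x hx := by
    rw [comp_apply, comp_apply, hf.map_shift w x hx, hg.map_shift w _ (hf.mapsTo hx)]
  map_zero := by rw [comp_apply, hf.map_zero, hg.map_zero]
  map_local x hx y hy v h :=
    hg.map_local _ (hf.mapsTo hx) _ (hf.mapsTo hy) v (hf.map_eqOn hx hy h)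

theorem iterate (hf : IsQuiescentCA X f r) (n : ℕ) : IsQuiescentCA X f^[n] ((n + 1) * r) := by
  induction n with
  | zero =>
    exact
      { __ := hf.toIsPointedSFT.mono (by simp)
        mapsTo := mapsTo_id X
        map_shift := fun _ _ _ => rfl
        map_zero := rfl
        map_local := fun _ _ _ _ v h => h (self_mem_box v _) }
  | succ n ih =>
    rw [iterate_succ]
    exact (ih.comp hf).mono (by linarith)

theorem iterate_eq_zero_of_le (hf : IsQuiescentCA X f r) {m n : ℕ} (hmn : m ≤ n)
    (h : f^[m] x = 0) : f^[n] x = 0 := by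
  obtain ⟨k, rfl⟩ := Nat.exists_eq_add_of_le' hmn
  rw [iterate_add_apply, h, (hf.iterate k).map_zero]

theorem map_superpose (hf : IsQuiescentCA X f r) (hu : u ∈ X) (hy : y ∈ X)
    (h : Separated (2 * r) u y) : f (superpose u y) = superpose (f u) (f y) := by
  have hmem := hf.superpose_mem hu hy h
  ext v
  rcases superpose_window h v with ⟨hl, hr⟩ | ⟨hr, hl⟩
  · rw [hf.map_local _ hmem u hu v hl, superpose_apply_of_right (hf.map_eq_zero hy hr)]
  · rw [hf.map_local _ hmem y hy v hr, superpose_apply_of_left (hf.map_eq_zero hu hl)]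

theorem map_indicator (hf : IsQuiescentCA X f r) {S : Set (ℤ × ℤ)} (hz : z ∈ X)
    (h : ZeroOnBoundary r S z) : f (S.indicator z) = S.indicator (f z) := by
  have hmem := hf.indicator_mem hz h
  ext v
  by_cases hv : v ∈ S
  · rw [hf.map_local _ hmem z hz v (h.eqOn_indicator hv), indicator_of_mem hv]
  · rw [hf.map_eq_zero hmem (h.eqOn_indicator_zero hv), indicator_of_notMem hv]

theorem iterate_indicator (hf : IsQuiescentCA X f r) {S : Set (ℤ × ℤ)} (hz : z ∈ X)
    (h : ∀ n, ZeroOnBoundary r S (f^[n] z)) (k : ℕ) :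
    f^[k] (S.indicator z) = S.indicator (f^[k] z) := by
  induction k with
  | zero => rfl
  | succ k ih =>
    rw [iterate_succ_apply', ih, hf.map_indicator ((hf.iterate k).mapsTo hz) (h k),
      iterate_succ_apply']

theorem eq_zero_of_apply_zero (hf : IsQuiescentCA X f r) {M : Set (Config A)} (hMX : M ⊆ X)
    (hM : ∀ w, ∀ x ∈ M, shift w x ∈ M) (h : ∀ x ∈ M, f x 0 = 0) : ∀ x ∈ M, f x = 0 := by
  intro x hx
  ext v
  simpa [hf.map_shift v x (hMX hx)] using h _ (hM v x hx)

theorem iterate_superpose_eq (hf : IsQuiescentCA X f r) (hu : u ∈ X) (hy : y ∈ X) {m n : ℕ}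
    (hm : f^[m] u = 0) (h : Separated (2 * ((m + 1) * r)) u y) (hmn : m ≤ n) :
    f^[n] (superpose u y) = f^[n] y := by
  obtain ⟨j, rfl⟩ := Nat.exists_eq_add_of_le' hmn
  rw [iterate_add_apply, (hf.iterate m).map_superpose hu hy h, hm, zero_superpose,
    ← iterate_add_apply]

theorem support_map_subset (hf : IsQuiescentCA X f r) (hx : x ∈ X) :
    support (f x) ⊆ ⋃ w ∈ support x, box w r := by
  intro v hv
  by_contra hvx
  refine hv (hf.map_eq_zero hx fun w hw => by_contra fun hxw => hvx ?_)
  exact mem_iUnion₂.2 ⟨w, hxw, mem_box_comm.1 hw⟩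

theorem support_map_subset_rows (hf : IsQuiescentCA X f r) (hx : x ∈ X) {b : ℕ}
    (h : support x ⊆ rows b) : support (f x) ⊆ rows (b + r) :=
  (hf.support_map_subset hx).trans (iUnion₂_subset fun _ hw => box_subset_rows_add (h hw))

end IsQuiescentCA

theorem AsymptoticallyNilpotent.eventually_eqOn (h : AsymptoticallyNilpotent X f) (hx : x ∈ X)
    {S : Set (ℤ × ℤ)} (hS : S.Finite) : ∀ᶠ n in atTop, EqOn (f^[n] x) 0 S :=
  hS.eventually_all.2 fun v _ => h x hx v

end CellularAutomata

section GluingFamilies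

variable [Zero A] {X E : Set (Config A)} {f : Config A → Config A} {r : ℕ}

/-- A family of points of `X`, invariant under the shifts and under `f`, in which well separated
points can be superposed, and in which a point that vanishes on a large box around the origin is
well separated from a prescribed one. -/
structure GluingFamily (X : Set (Config A)) (f : Config A → Config A) (r : ℕ)
    (E : Set (Config A)) : Prop where
  subset : E ⊆ X
  zero_mem : 0 ∈ E
  shift_mem : ∀ w, ∀ x ∈ E, shift w x ∈ E
  mapsTo : MapsTo f E E
  superpose_mem : ∀ u ∈ E, ∀ y ∈ E, Separated (2 * r) u y → superpose u y ∈ E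
  exists_separated : ∀ u ∈ E, ∀ d, ∃ K, ∀ y ∈ E, EqOn y 0 (box 0 K) → Separated d u y

namespace GluingFamily

/-- The points of `E` with a finite orbit ending at `0`. -/
def mortal (f : Config A → Config A) (E : Set (Config A)) : Set (Config A) :=
  {x ∈ E | ∃ m, f^[m] x = 0}

theorem mortal_subset (f : Config A → Config A) (E : Set (Config A)) : mortal f E ⊆ E :=
  sep_subset E _

theorem iterate_mem_mortal (hE : GluingFamily X f r E) (hf : IsQuiescentCA X f r) {x : Config A}
    (hx : x ∈ mortal f E) (n : ℕ) : f^[n] x ∈ mortal f E := by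
  obtain ⟨hxE, m, hm⟩ := hx
  refine ⟨hE.mapsTo.iterate n hxE, m, ?_⟩
  rw [← iterate_add_apply]
  exact hf.iterate_eq_zero_of_le (Nat.le_add_right m n) hm

theorem shift_mem_mortal (hE : GluingFamily X f r E) (hf : IsQuiescentCA X f r) (w : ℤ × ℤ) :
    ∀ x ∈ mortal f E, shift w x ∈ mortal f E := by
  rintro x ⟨hx, m, hm⟩
  exact ⟨hE.shift_mem w x hx, m, by rw [(hf.iterate m).map_shift w x (hE.subset hx), hm]; rfl⟩

theorem exists_iterate_superpose_eq (hE : GluingFamily X f r E) (hf : IsQuiescentCA X f r)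
    {u : Config A} (hu : u ∈ mortal f E) : ∃ K m, ∀ y ∈ mortal f E, EqOn y 0 (box 0 K) →
      superpose u y ∈ mortal f E ∧ ∀ n ≥ m, f^[n] (superpose u y) = f^[n] y := by
  obtain ⟨huE, m, hm⟩ := hu
  obtain ⟨K, hK⟩ := hE.exists_separated u huE (2 * ((m + 1) * r))
  refine ⟨K, m, fun y ⟨hyE, k, hk⟩ hy => ?_⟩
  have hsep := hK y hyE hy
  have heq (n : ℕ) (hn : n ≥ m) : f^[n] (superpose u y) = f^[n] y :=
    hf.iterate_superpose_eq (hE.subset huE) (hE.subset hyE) hm hsep hn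
  refine ⟨⟨hE.superpose_mem u huE y hyE (hsep.mono (by nlinarith)), k + m, ?_⟩, heq⟩
  rw [heq _ (Nat.le_add_left m k), hf.iterate_eq_zero_of_le (Nat.le_add_right k m) hk]

end GluingFamily

end GluingFamilies

section Topology

variable [TopologicalSpace A] [DiscreteTopology A]

theorem hasBasis_nhds_config (x : Config A) :
    (𝓝 x).HasBasis (fun _ : ℕ => True) fun l => {y | EqOn y x (box 0 l)} := by
  refine ⟨fun s => ⟨fun hs => ?_, fun ⟨l, _, hl⟩ => mem_of_superset ?_ hl⟩⟩
  · rw [nhds_pi, Filter.mem_pi] at hs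
    obtain ⟨I, hI, t, ht, hts⟩ := hs
    obtain ⟨l, hl⟩ := exists_subset_box_zero hI
    refine ⟨l, trivial, fun y hy => hts fun v hv => ?_⟩
    rw [hy (hl hv)]
    exact mem_of_mem_nhds (ht v)
  · have : {y : Config A | EqOn y x (box 0 l)} = (box 0 l).pi fun v => {x v} := rfl
    rw [this]
    exact set_pi_mem_nhds (finite_box 0 l) fun v _ => (isOpen_discrete _).mem_nhds rfl

theorem mem_closure_config {M : Set (Config A)} {x : Config A} :
    x ∈ closure M ↔ ∀ l, ∃ y ∈ M, EqOn y x (box 0 l) := by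
  rw [mem_closure_iff_nhds_basis (hasBasis_nhds_config x)]
  simp

variable [Zero A] {X E M : Set (Config A)} {f : Config A → Config A} {r : ℕ}

theorem IsPointedSFT.isClosed (hX : IsPointedSFT X r) : IsClosed X := by
  refine isClosed_of_closure_subset fun x hx => hX.mem_of_local x fun v => ?_
  obtain ⟨l, hl⟩ := exists_subset_box_zero (finite_box v r)
  obtain ⟨y, hy, hyx⟩ := mem_closure_config.1 hx l
  exact ⟨y, hy, (hyx.mono hl).symm⟩

theorem IsQuiescentCA.continuousOn (hf : IsQuiescentCA X f r) : ContinuousOn f X := by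
  refine continuousOn_pi.2 fun v x hx => tendsto_const_nhds.congr' ?_
  obtain ⟨l, hl⟩ := exists_subset_box_zero (finite_box v r)
  have hnear : {y | EqOn y x (box 0 l)} ∈ 𝓝[X] x :=
    mem_nhdsWithin_of_mem_nhds ((hasBasis_nhds_config x).mem_of_mem trivial)
  filter_upwards [hnear, self_mem_nhdsWithin] with y hyx hy
  exact hf.map_local x hx y hy v (hyx.symm.mono hl)

variable [Finite A]

/-- Baire category, applied to the closed sets of points whose orbit vanishes on `S` from time `N`
on. -/
theorem AsymptoticallyNilpotent.exists_uniform_cylinder (hnil : AsymptoticallyNilpotent X f)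
    (hf : IsQuiescentCA X f r) (hMX : M ⊆ X) (hM : M.Nonempty) {S : Set (ℤ × ℤ)}
    (hS : S.Finite) : ∃ u ∈ M, ∃ l N : ℕ, ∀ x ∈ closure M, EqOn x u (box 0 l) →
      ∀ n ≥ N, EqOn (f^[n] x) 0 S := by
  have hcl : closure M ⊆ X := closure_minimal hMX hf.isClosed
  have : CompactSpace (closure M) := isCompact_iff_compactSpace.1 isClosed_closure.isCompact
  have : Nonempty (closure M) := hM.closure.to_subtype
  let C : ℕ → Set (closure M) := fun N => {x | ∀ n ≥ N, EqOn (f^[n] x) 0 S}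
  have hclosed (N : ℕ) : IsClosed (C N) := by
    simp only [C, EqOn, ofPred_forall]
    refine isClosed_iInter fun n => isClosed_iInter fun _ => isClosed_iInter fun v =>
      isClosed_iInter fun _ => isClosed_eq ?_ continuous_const
    exact (continuous_apply v).comp ((hf.iterate n).continuousOn.mono hcl).domRestrict
  have hcover : ⋃ N, C N = univ := by
    refine eq_univ_of_forall fun x => mem_iUnion.2 ?_
    exact eventually_atTop.1 (hnil.eventually_eqOn (hcl x.2) hS)
  obtain ⟨N, x, hx⟩ := nonempty_interior_of_iUnion_of_closed hclosed hcover
  rw [mem_interior_iff_mem_nhds, nhds_subtype_eq_comap] at hx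
  obtain ⟨l, -, hl⟩ := ((hasBasis_nhds_config x.1).comap Subtype.val).mem_iff.1 hx
  obtain ⟨u, hu, hux⟩ := mem_closure_config.1 x.2 l
  exact ⟨u, hu, l, N, fun y hy hyu => hl (a := ⟨y, hy⟩) (hyu.trans hux)⟩

theorem AsymptoticallyNilpotent.exists_uniform_visit (hnil : AsymptoticallyNilpotent X f)
    (hf : IsQuiescentCA X f r) {S : Set (ℤ × ℤ)} (hS : S.Finite) :
    ∃ J, ∀ z ∈ X, ∃ j ≤ J, EqOn (f^[j] z) 0 S := by
  refine hf.isClosed.isCompact.induction_on (p := fun s => ∃ J, ∀ z ∈ s, ∃ j ≤ J,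
    EqOn (f^[j] z) 0 S) ⟨0, by simp⟩ (fun s t hst ⟨J, hJ⟩ => ⟨J, fun z hz => hJ z (hst hz)⟩) ?_ ?_
  · rintro s t ⟨J, hJ⟩ ⟨J', hJ'⟩
    refine ⟨max J J', fun z hz => hz.elim (fun hz => ?_) fun hz => ?_⟩
    · obtain ⟨j, hj, hjz⟩ := hJ z hz
      exact ⟨j, hj.trans (le_max_left J J'), hjz⟩
    · obtain ⟨j, hj, hjz⟩ := hJ' z hz
      exact ⟨j, hj.trans (le_max_right J J'), hjz⟩
  · intro x hx
    obtain ⟨j, hj⟩ := (hnil.eventually_eqOn hx hS).exists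
    refine ⟨{z | EqOn (f^[j] z) 0 S}, ?_, j, fun z hz => ⟨j, le_rfl, hz⟩⟩
    have hzero : {z : Config A | EqOn z 0 S} ∈ 𝓝 (f^[j] x) :=
      mem_of_superset (set_pi_mem_nhds hS fun v hv => (isOpen_discrete {0}).mem_nhds (hj hv))
        fun z hz v hv => hz v hv
    exact (hf.iterate j).continuousOn x hx hzero

namespace GluingFamily

/-- By Baire, the orbits of the mortal points near some mortal `u` vanish at the origin from a
uniform time on. A mortal point that vanishes on a large box becomes such a point when `u` is
superposed, and `u` itself dies out; by compactness all orbits visit the large box of zeros in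
bounded time. -/
theorem exists_uniform (hE : GluingFamily X f r E) (hf : IsQuiescentCA X f r)
    (hnil : AsymptoticallyNilpotent X f) : ∃ T, ∀ x ∈ mortal f E, f^[T] x = 0 := by
  have hMX : mortal f E ⊆ X := (mortal_subset f E).trans hE.subset
  obtain ⟨u, hu, l, N, hN⟩ := hnil.exists_uniform_cylinder hf hMX
    ⟨0, hE.zero_mem, 0, rfl⟩ (finite_singleton (0 : ℤ × ℤ))
  obtain ⟨K, m, hK⟩ := hE.exists_iterate_superpose_eq hf hu
  have hvanish (y : Config A) (hy : y ∈ mortal f E) (hy0 : EqOn y 0 (box 0 (max K l))) (n : ℕ)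
      (hn : n ≥ max N m) : f^[n] y 0 = 0 := by
    obtain ⟨hmem, heq⟩ := hK y hy (hy0.mono (box_subset_box (le_max_left K l)))
    rw [← heq n (le_of_max_le_right hn)]
    refine hN _ (subset_closure hmem) (fun v hv => superpose_apply_of_right ?_) n
      (le_of_max_le_left hn) rfl
    exact hy0 (box_subset_box (le_max_right K l) hv)
  obtain ⟨J, hJ⟩ := hnil.exists_uniform_visit hf (finite_box 0 (max K l))
  refine ⟨J + max N m, (hf.iterate _).eq_zero_of_apply_zero hMX
    (hE.shift_mem_mortal hf) fun x hx => ?_⟩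
  obtain ⟨j, hj, hjx⟩ := hJ x (hMX hx)
  obtain ⟨i, rfl⟩ := Nat.exists_eq_add_of_le' hj
  rw [show i + j + max N m = i + max N m + j by ring, iterate_add_apply]
  exact hvanish _ (hE.iterate_mem_mortal hf hx j) hjx _ (Nat.le_add_left _ i)

end GluingFamily

end Topology

section PeriodicBands

variable [Zero A] {X : Set (Config A)} {f : Config A → Config A} {r p : ℕ}

/-- The points of `X` that are horizontally `p`-periodic and supported on a horizontal strip. -/
def periodicBands (X : Set (Config A)) (p : ℕ) : Set (Config A) :=
  {x ∈ X | Periodic x ((p : ℤ), 0) ∧ ∃ b, support x ⊆ rows b}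

theorem periodicBands_subset (X : Set (Config A)) (p : ℕ) : periodicBands X p ⊆ X :=
  sep_subset X _

omit [Zero A] in
theorem eqOn_rows_of_eqOn_box {x y : Config A} (hx : Periodic x ((p : ℤ), 0))
    (hy : Periodic y ((p : ℤ), 0)) (hp : 0 < p) {K : ℕ} (hpK : p ≤ K)
    (h : EqOn x y (box 0 K)) : EqOn x y (rows K) := by
  intro v hv
  rw [← hx.sub_zsmul_eq (v.1 / p), ← hy.sub_zsmul_eq (v.1 / p)]
  refine h (mem_box_zero.2 ?_)
  have hmod : v.1 - v.1 / p * p = v.1 % p := by linarith [Int.ediv_mul_add_emod v.1 p]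
  have hlt := Int.emod_lt_of_pos v.1 (Int.natCast_pos.2 hp)
  have hnonneg := Int.emod_nonneg v.1 (Int.natCast_ne_zero.2 hp.ne')
  simpa [hmod] using ⟨by omega, mem_rows.1 hv⟩

theorem IsPointedSFT.shift_mem_periodicBands (hX : IsPointedSFT X r) (w : ℤ × ℤ) :
    ∀ x ∈ periodicBands X p, shift w x ∈ periodicBands X p := by
  rintro x ⟨hx, hper, b, hb⟩
  refine ⟨hX.shift_mem w x hx, fun v => ?_, b + w.2.natAbs, fun v hv => ?_⟩
  · rw [shift_apply, shift_apply, add_right_comm, hper]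
  · have := mem_rows.1 (hb hv)
    simp only [Prod.snd_add] at this
    exact mem_rows.2 (by omega)

theorem IsPointedSFT.superpose_mem_periodicBands (hX : IsPointedSFT X r) {u y : Config A}
    (hu : u ∈ periodicBands X p) (hy : y ∈ periodicBands X p) (h : Separated (2 * r) u y) :
    superpose u y ∈ periodicBands X p := by
  obtain ⟨huX, huper, b, hb⟩ := hu
  obtain ⟨hyX, hyper, c, hc⟩ := hy
  refine ⟨hX.superpose_mem huX hyX h, fun v => ?_, max b c, ?_⟩
  · rw [superpose, superpose, huper v, hyper v]
  · exact (support_superpose_subset u y).trans (union_subset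
      (hb.trans (rows_subset_rows (le_max_left b c)))
      (hc.trans (rows_subset_rows (le_max_right b c))))

theorem IsQuiescentCA.gluingFamily_periodicBands (hf : IsQuiescentCA X f r) (hp : 0 < p) :
    GluingFamily X f r (periodicBands X p) where
  subset := periodicBands_subset X p
  zero_mem := ⟨hf.zero_mem, fun _ => rfl, 0, by simp⟩
  shift_mem := hf.shift_mem_periodicBands
  mapsTo := by
    rintro x ⟨hx, hper, b, hb⟩
    have hshift : shift ((p : ℤ), 0) x = x := funext hper
    refine ⟨hf.mapsTo hx, fun v => ?_, b + r, hf.support_map_subset_rows hx hb⟩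
    change shift ((p : ℤ), 0) (f x) v = f x v
    rw [← hf.map_shift _ x hx, hshift]
  superpose_mem _ hu _ hy h := hf.superpose_mem_periodicBands hu hy h
  exists_separated := by
    rintro u ⟨-, -, b, hb⟩ d
    refine ⟨max p (b + d), fun y ⟨_, hyper, _⟩ hy v hv => ?_⟩
    have hrows : EqOn y 0 (rows (max p (b + d))) :=
      eqOn_rows_of_eqOn_box hyper (fun _ => rfl) hp (le_max_left _ _) hy
    exact hrows.mono ((box_subset_rows_add (hb hv)).trans (rows_subset_rows (le_max_right _ _)))

theorem IsPointedSFT.superpose_shift_mem_periodicBands (hX : IsPointedSFT X r) {u q : Config A}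
    (hu : u ∈ periodicBands X p) (hq : q ∈ periodicBands X p) {b c : ℕ} (hb : support u ⊆ rows b)
    (hc : support q ⊆ rows c) {t : ℤ} (ht : b + c + 2 * r < |t|) :
    superpose (shift (0, -t) u) q ∈ periodicBands X p ∧
      EqOn (shift (0, t) (superpose (shift (0, -t) u) q)) u (rows b) ∧
      ∀ v : ℤ × ℤ, b < |v.2 - t| → superpose (shift (0, -t) u) q v = q v := by
  have hshift : support (shift (0, -t) u) ⊆ {v | |v.2 - t| ≤ b} := fun v hv => by
    simpa [abs_le, mem_rows, ← sub_eq_add_neg] using hb hv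
  rw [lt_abs] at ht
  refine ⟨hX.superpose_mem_periodicBands (hX.shift_mem_periodicBands _ u hu) hq ?_,
    fun v hv => ?_, fun v hv => ?_⟩
  · refine separated_of_support_subset hshift hc fun v hv w hw hwv => ?_
    simp only [mem_ofPred_eq, abs_le, mem_rows, mem_box] at hv hw hwv
    omega
  · have hq0 : q (v + (0, t)) = 0 := by
      by_contra hne
      have := hc hne
      simp only [mem_rows, Prod.snd_add] at this hv
      omega
    rw [shift_apply, superpose_apply_of_right hq0, shift_apply, add_assoc]
    simp [Prod.mk_zero_zero]
  · exact superpose_apply_of_left (by_contra fun hne => hv.not_ge (hshift hne))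

variable [Finite A] [TopologicalSpace A] [DiscreteTopology A]

/-- Such a band `u` is a wall: from time `N` on, no influence crosses a copy of it. -/
theorem AsymptoticallyNilpotent.exists_wall (hnil : AsymptoticallyNilpotent X f)
    (hf : IsQuiescentCA X f r) (hp : 0 < p) :
    ∃ u ∈ periodicBands X p, ∃ b N : ℕ, support u ⊆ rows b ∧
      ∀ x ∈ periodicBands X p, ∀ t : ℤ, EqOn (shift (0, t) x) u (rows b) →
        ∀ n ≥ N, ∀ v, |v.2 - t| ≤ r → f^[n] x v = 0 := by
  have hQ := hf.gluingFamily_periodicBands hp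
  obtain ⟨u, hu, l, N, hN⟩ := hnil.exists_uniform_cylinder hf hQ.subset ⟨0, hQ.zero_mem⟩
    (finite_box 0 (max p r))
  obtain ⟨b, hb⟩ := hu.2.2
  refine ⟨u, hu, max b l, N, hb.trans (rows_subset_rows (le_max_left b l)),
    fun x hx t hxu n hn v hv => ?_⟩
  have hxt := hQ.shift_mem (0, t) x hx
  have hbox := hN _ (subset_closure hxt) (hxu.mono ((box_zero_subset_rows l).trans
    (rows_subset_rows (le_max_right b l)))) n hn
  have hrows := eqOn_rows_of_eqOn_box (hQ.mapsTo.iterate n hxt).2.1 (fun _ => rfl) hp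
    (le_max_left p r) hbox
  have hvt : v - (0, t) ∈ rows (max p r) := rows_subset_rows (le_max_right p r) (abs_le.1 hv)
  rw [(hf.iterate n).map_shift _ x (hQ.subset hx)] at hrows
  simpa only [shift_apply, sub_add_cancel, Pi.zero_apply] using hrows hvt

/-- A wall is inserted far above and another one far below `q`. -/
theorem AsymptoticallyNilpotent.exists_walled (hnil : AsymptoticallyNilpotent X f)
    (hf : IsQuiescentCA X f r) (hp : 0 < p) :
    ∃ N, ∀ q ∈ periodicBands X p, ∀ L : ℕ, ∃ x ∈ periodicBands X p, EqOn x q (rows L) ∧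
      ∃ s t : ℤ, 0 ∈ Icc s t ∧ ∀ n ≥ N, ZeroOnBoundary r (Prod.snd ⁻¹' Icc s t) (f^[n] x) := by
  obtain ⟨u, hu, b, N, hub, hwall⟩ := hnil.exists_wall hf hp
  refine ⟨N, fun q hq L => ?_⟩
  obtain ⟨c, hqc⟩ := hq.2.2
  obtain ⟨t, ht⟩ : ∃ t : ℤ, t = L + 2 * b + c + 2 * r + 1 := ⟨_, rfl⟩
  obtain ⟨hy, hyu, hyq⟩ := hf.superpose_shift_mem_periodicBands hu hq hub hqc (t := t)
    (by rw [lt_abs]; omega)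
  generalize superpose (shift (0, -t) u) q = y at hy hyu hyq
  obtain ⟨d, hyd⟩ := hy.2.2
  obtain ⟨s, hs⟩ : ∃ s : ℤ, s = -(L + 2 * b + d + 2 * r + 1) := ⟨_, rfl⟩
  obtain ⟨hx, hxu, hxy⟩ := hf.superpose_shift_mem_periodicBands hu hy hub hyd (t := s)
    (by rw [lt_abs]; omega)
  generalize superpose (shift (0, -s) u) y = x at hx hxu hxy
  refine ⟨x, hx, fun v hv => ?_, s, t, ⟨by omega, by omega⟩, fun n hn => ?_⟩
  · rw [mem_rows] at hv
    rw [hxy v (lt_abs.2 (by omega)), hyq v (lt_abs.2 (by omega))]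
  · refine zeroOnBoundary_preimage_Icc (fun _ _ h => h.2) (hwall x hx s hxu n hn)
      (hwall x hx t ?_ n hn)
    refine EqOn.trans (fun v hv => hxy _ (lt_abs.2 ?_)) hyu
    simp only [mem_rows, Prod.snd_add] at hv ⊢
    omega

/-- Cut off at its walls, a walled band becomes a mortal one, whose mortality is uniform. -/
theorem AsymptoticallyNilpotent.exists_iterate_periodicBands_eq_zero
    (hnil : AsymptoticallyNilpotent X f) (hf : IsQuiescentCA X f r) (hp : 0 < p) :
    ∃ T, ∀ q ∈ periodicBands X p, f^[T] q = 0 := by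
  have hQ := hf.gluingFamily_periodicBands hp
  obtain ⟨T, hT⟩ := hQ.exists_uniform hf hnil
  obtain ⟨N, hN⟩ := hnil.exists_walled hf hp
  refine ⟨T + N, (hf.iterate _).eq_zero_of_apply_zero hQ.subset hQ.shift_mem fun q hq => ?_⟩
  obtain ⟨x, hx, hxq, s, t, h0, hboundary⟩ := hN q hq ((T + N + 1) * r)
  set S : Set (ℤ × ℤ) := Prod.snd ⁻¹' Icc s t
  have hz := hQ.mapsTo.iterate N hx
  have hcut := hf.iterate_indicator (S := S) (hQ.subset hz)
    fun n => by rw [← iterate_add_apply]; exact hboundary _ (Nat.le_add_left N n)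
  have hS : S ⊆ rows (max p (max s.natAbs t.natAbs)) := fun v hv => by
    simp only [S, mem_preimage, mem_Icc] at hv
    exact mem_rows.2 ⟨by omega, by omega⟩
  have hmortal : S.indicator (f^[N] x) ∈ GluingFamily.mortal f (periodicBands X p) := by
    obtain ⟨k, hk⟩ := (hnil.eventually_eqOn (hQ.subset hz) (finite_box 0 _)).exists
    have hrows := eqOn_rows_of_eqOn_box (hQ.mapsTo.iterate k hz).2.1 (fun _ => rfl) hp
      (le_max_left p (max s.natAbs t.natAbs)) hk
    refine ⟨⟨hf.indicator_mem (hQ.subset hz) (hboundary N le_rfl), fun v => ?_, _,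
      support_indicator_subset.trans hS⟩, k, ?_⟩
    · simp [indicator, S, hz.2.1 v]
    · rw [hcut k]
      refine indicator_eq_zero.2 ?_
      exact disjoint_left.2 fun v hv hvS => hv (hrows (hS hvS))
  calc f^[T + N] q 0 = f^[T + N] x 0 :=
        ((hf.iterate _).map_local x (hQ.subset hx) q (hQ.subset hq) 0
          (hxq.mono (box_zero_subset_rows _))).symm
    _ = S.indicator (f^[T] (f^[N] x)) 0 := by
        rw [iterate_add_apply, indicator_of_mem (show (0 : ℤ × ℤ) ∈ S from h0)]
    _ = 0 := by rw [← hcut T, hT _ hmortal, Pi.zero_apply]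

end PeriodicBands

section Sequences

variable {B : Type*} {r p P : ℕ} {g g' g'' : ℤ → B} {I J : Set ℤ} {t : ℤ}

/-- Every window of radius `r` of the sequence `g'` is a window of `g`. -/
def WindowsOccur (r : ℕ) (g' g : ℤ → B) : Prop :=
  ∀ c : ℤ, ∃ s, ∀ i ∈ Icc (c - r) (c + r), g' i = g (i + s)

/-- The sequence `g` is `P`-periodic as far as its values on `I` are concerned. -/
def PeriodicOn (P : ℕ) (g : ℤ → B) (I : Set ℤ) : Prop :=
  ∀ i ∈ I, ∀ j ∈ I, i ≡ j [ZMOD P] → g i = g j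

theorem WindowsOccur.trans (h₁ : WindowsOccur r g'' g') (h₂ : WindowsOccur r g' g) :
    WindowsOccur r g'' g := by
  intro c
  obtain ⟨s, hs⟩ := h₁ c
  obtain ⟨s', hs'⟩ := h₂ (c + s)
  refine ⟨s + s', fun i hi => ?_⟩
  rw [hs i hi, hs' _ ⟨by linarith [hi.1], by linarith [hi.2]⟩, add_assoc]

theorem WindowsOccur.comp_neg (h : WindowsOccur r g' g) :
    WindowsOccur r (fun i => g' (-i)) fun i => g (-i) := by
  intro c
  obtain ⟨s, hs⟩ := h (-c)
  refine ⟨-s, fun i hi => ?_⟩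
  beta_reduce
  rw [hs _ ⟨by linarith [hi.2], by linarith [hi.1]⟩, neg_add, neg_neg]

theorem WindowsOccur.exists_apply_eq (h : WindowsOccur r g' g) (i : ℤ) : ∃ j, g' i = g j := by
  obtain ⟨s, hs⟩ := h i
  exact ⟨i + s, hs i ⟨by simp, by simp⟩⟩

theorem PeriodicOn.mono (h : PeriodicOn P g J) (hIJ : I ⊆ J) : PeriodicOn P g I :=
  fun i hi j hj => h i (hIJ hi) j (hIJ hj)

theorem PeriodicOn.of_dvd (h : PeriodicOn p g I) (hp : p ∣ P) : PeriodicOn P g I :=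
  fun i hi j hj hij => h i hi j hj (hij.of_dvd (Int.natCast_dvd_natCast.2 hp))

theorem PeriodicOn.congr (h : PeriodicOn P g I) (hg : EqOn g' g I) : PeriodicOn P g' I :=
  fun i hi j hj hij => by rw [hg hi, hg hj, h i hi j hj hij]

theorem PeriodicOn.comp_neg (h : PeriodicOn P g I) :
    PeriodicOn P (fun i => g (-i)) (Neg.neg ⁻¹' I) :=
  fun _ hi _ hj hij => h _ hi _ hj hij.neg

theorem add_emod_modEq (a i : ℤ) (P : ℕ) : a + (i - a) % P ≡ i [ZMOD P] := by
  simpa using (Int.mod_modEq (i - a) P).add_left a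

theorem PeriodicOn.exists_periodic (hP : 0 < P) {a : ℤ} (hI : Icc (a - r) (a + P - 1 + r) ⊆ I)
    (h : PeriodicOn P g I) :
    ∃ g', Periodic g' (P : ℤ) ∧ EqOn g' g I ∧ WindowsOccur r g' g := by
  have hmem (i : ℤ) : a + (i - a) % P ∈ Icc a (a + P - 1) := by
    have := Int.emod_nonneg (i - a) (Int.natCast_ne_zero.2 hP.ne')
    have := Int.emod_lt_of_pos (i - a) (Int.natCast_pos.2 hP)
    exact ⟨by omega, by omega⟩
  have hmemI (i j : ℤ) (hj : j ∈ Icc (-r : ℤ) r) : a + (i - a) % P + j ∈ I :=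
    hI ⟨by linarith [(hmem i).1, hj.1], by linarith [(hmem i).2, hj.2]⟩
  have hmemI₀ (i : ℤ) : a + (i - a) % P ∈ I := by simpa using hmemI i 0 (by simp)
  refine ⟨fun i => g (a + (i - a) % P), fun i => ?_, fun i hi => ?_, fun c => ?_⟩
  · simp only [add_sub_right_comm, Int.add_emod_right]
  · exact h _ (hmemI₀ i) i hi (add_emod_modEq a i P)
  · refine ⟨a + (c - a) % P - c, fun i hi => h _ (hmemI₀ i) _ ?_ ?_⟩
    · have := hmemI c (i - c) ⟨by linarith [hi.1], by linarith [hi.2]⟩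
      rwa [show i + (a + (c - a) % P - c) = a + (c - a) % P + (i - c) by ring]
    · refine (add_emod_modEq a i P).trans ?_
      simpa using (((add_emod_modEq a c P).sub_right c).add_left i).symm

/-- Follow `g` up to `t`, then repeat the block of length `p` that starts at `t`. -/
def fold (g : ℤ → B) (t : ℤ) (p : ℕ) : ℤ → B :=
  fun i => if i < t then g i else g (t + (i - t) % p)

theorem fold_of_lt {i : ℤ} (h : i < t) : fold g t p i = g i := if_pos h

theorem fold_of_ge {i : ℤ} (h : t ≤ i) : fold g t p i = g (t + (i - t) % p) := if_neg h.not_gt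

theorem periodicOn_fold : PeriodicOn p (fold g t p) (Ici t) := by
  intro i hi j hj hij
  rw [fold_of_ge hi, fold_of_ge hj, hij.sub_right t]

theorem apply_add_emod (hp : 2 * r < p) (h : ∀ j ∈ Icc (-r : ℤ) r, g (t + j) = g (t + p + j))
    {i : ℤ} (hi : i ∈ Icc (t - r) (t + p + r)) : g (t + (i - t) % p) = g i := by
  obtain ⟨hi₁, hi₂⟩ := hi
  rcases lt_or_ge i t with hit | hit
  · have hj := h (i - t) ⟨by omega, by omega⟩
    rw [← Int.add_emod_right, Int.emod_eq_of_lt (by omega) (by omega)]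
    convert hj.symm using 2 <;> ring
  rcases lt_or_ge i (t + p) with hip | hip
  · rw [Int.emod_eq_of_lt (by omega) (by omega), add_sub_cancel]
  · have hj := h (i - t - p) ⟨by omega, by omega⟩
    rw [← Int.sub_emod_right, Int.emod_eq_of_lt (by omega) (by omega)]
    convert hj using 2
    ring

theorem windowsOccur_fold (hp : 2 * r < p)
    (h : ∀ j ∈ Icc (-r : ℤ) r, g (t + j) = g (t + p + j)) : WindowsOccur r (fold g t p) g := by
  intro c
  rcases lt_or_ge c t with hct | hct
  · refine ⟨0, fun i ⟨hi₁, hi₂⟩ => ?_⟩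
    rw [add_zero]
    rcases lt_or_ge i t with hit | hit
    · exact fold_of_lt hit
    · rw [fold_of_ge hit, apply_add_emod hp h ⟨by omega, by omega⟩]
  · have hlt := Int.emod_lt_of_pos (c - t) (b := p) (by omega)
    have hnonneg := Int.emod_nonneg (c - t) (b := p) (by omega)
    refine ⟨t + (c - t) % p - c, fun i ⟨hi₁, hi₂⟩ => ?_⟩
    rcases lt_or_ge i t with hit | hit
    · rw [fold_of_lt hit, Int.emod_eq_of_lt (by omega) (by omega)]
      congr 1
      ring
    · have hmod : i ≡ i + (t + (c - t) % p - c) [ZMOD p] := by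
        simpa using (((add_emod_modEq t c p).sub_right c).add_left i).symm
      rw [fold_of_ge hit, ← apply_add_emod hp h (i := i + _) ⟨by omega, by omega⟩,
        hmod.sub_right t]

theorem exists_window_repetition {κ : ℕ} {C : Finset B} (hC : C.card ≤ κ)
    (hg : ∀ i ≥ t, g i ∈ C) : ∃ s > t, ∃ p, 2 * r < p ∧
      p ∣ (κ ^ (2 * r + 1)).factorial * (2 * r + 1) ∧
      ∀ j ∈ Icc (-r : ℤ) r, g (s + j) = g (s + p + j) := by
  let window : ℕ → Fin (2 * r + 1) → B := fun k j => g (t + 1 + k * (2 * r + 1) + j)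
  have hwindow : MapsTo window (Finset.range (κ ^ (2 * r + 1) + 1))
      (Fintype.piFinset fun _ : Fin (2 * r + 1) => C) :=
    fun k _ => Fintype.mem_piFinset.2 fun j => hg _ (by
      have : (0 : ℤ) ≤ k * (2 * r + 1) + j := by positivity
      linarith)
  obtain ⟨k, hk, k', hk', hne, heq⟩ :=
    Finset.exists_ne_map_eq_of_card_lt_of_maps_to (by
      simpa [Nat.lt_succ_iff] using Nat.pow_le_pow_left hC (2 * r + 1)) hwindow
  wlog hlt : k < k' generalizing k k'
  · exact this k' hk' k hk hne.symm heq.symm (hne.lt_or_gt.resolve_left hlt)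
  obtain ⟨d, rfl⟩ := Nat.exists_eq_add_of_lt hlt
  rw [Finset.mem_range] at hk'
  have hnonneg : (0 : ℤ) ≤ k * (2 * r + 1) + r := by positivity
  refine ⟨t + 1 + k * (2 * r + 1) + r, by linarith, (d + 1) * (2 * r + 1), by nlinarith,
    mul_dvd_mul_right (Nat.dvd_factorial (Nat.succ_pos d) (by omega)) _, fun j ⟨hj₁, hj₂⟩ => ?_⟩
  have hj : ((j + r).toNat : ℤ) = j + r := Int.toNat_of_nonneg (by omega)
  have := congr_fun heq ⟨(j + r).toNat, by omega⟩
  simp only [window, hj] at this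
  convert this using 2
  · ring
  · push_cast
    ring

theorem exists_periodicOn_Ici (κ r : ℕ) : ∃ P > 0, ∀ C : Finset B, C.card ≤ κ →
    ∀ (g : ℤ → B) (t : ℤ), (∀ i ≥ t, g i ∈ C) →
      ∃ g', EqOn g' g (Iic t) ∧ WindowsOccur r g' g ∧ ∃ s, PeriodicOn P g' (Ici s) := by
  refine ⟨(κ ^ (2 * r + 1)).factorial * (2 * r + 1), by positivity, fun C hC g t hg => ?_⟩
  obtain ⟨s, hs, p, hp, hdvd, hrep⟩ := exists_window_repetition (r := r) hC hg
  exact ⟨fold g s p, fun i hi => fold_of_lt (lt_of_le_of_lt hi hs), windowsOccur_fold hp hrep, s,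
    periodicOn_fold.of_dvd hdvd⟩

theorem exists_periodicOn_tails (κ r : ℕ) : ∃ P > 0, ∀ C : Finset B, C.card ≤ κ →
    ∀ (g : ℤ → B) (t : ℕ), (∀ i : ℤ, t ≤ |i| → g i ∈ C) →
      ∃ g', EqOn g' g (Icc (-t) t) ∧ WindowsOccur r g' g ∧
        ∃ s : ℤ, PeriodicOn P g' (Ici s) ∧ PeriodicOn P g' (Iic (-s)) := by
  obtain ⟨P, hP, h⟩ := exists_periodicOn_Ici (B := B) κ r
  refine ⟨P, hP, fun C hC g t hg => ?_⟩
  obtain ⟨g₁, heq₁, hwin₁, s₁, hs₁⟩ := h C hC g t fun i hi => hg i (hi.trans (le_abs_self i))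
  obtain ⟨g₂, heq₂, hwin₂, s₂, hs₂⟩ := h C hC (fun i => g₁ (-i)) t fun i hi => by
    rw [heq₁ (show -i ≤ t by linarith)]
    exact hg _ (by simpa using hi.trans (le_abs_self i))
  have heq : EqOn (fun i => g₂ (-i)) g₁ (Ici (-t)) := fun i hi => by
    simpa using heq₂ (show -i ≤ t from neg_le.1 hi)
  refine ⟨fun i => g₂ (-i), fun i hi => (heq hi.1).trans (heq₁ hi.2), ?_, max (max s₁ s₂) (-t),
    ?_, ?_⟩
  · simpa using hwin₂.comp_neg.trans (by simpa using hwin₁)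
  · refine (hs₁.mono (Ici_subset_Ici.2 ?_)).congr (heq.mono (Ici_subset_Ici.2 (le_max_right _ _)))
    exact (le_max_left _ _).trans (le_max_left _ _)
  · have hle : s₂ ≤ max (max s₁ s₂) (-t) := (le_max_right _ _).trans (le_max_left _ _)
    exact hs₂.comp_neg.mono fun i hi => hle.trans (le_neg.1 hi)

end Sequences

section Columns

variable [Zero A]

theorem exists_finset_support_subset [Finite A] (S : Finset ℤ) :
    ∃ C : Finset (ℤ → A), C.card ≤ Nat.card A ^ S.card ∧ ∀ g, support g ⊆ S → g ∈ C := by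
  classical
  have := Fintype.ofFinite A
  let extend : (S → A) → ℤ → A := fun h i => if hi : i ∈ S then h ⟨i, hi⟩ else 0
  refine ⟨Finset.univ.image extend, Finset.card_image_le.trans (by simp), fun g hg => ?_⟩
  refine Finset.mem_image.2 ⟨fun i => g i, Finset.mem_univ _, funext fun i => ?_⟩
  by_cases hi : i ∈ S
  · exact dif_pos hi
  · exact (dif_neg hi).trans (notMem_support.1 fun h => hi (hg h)).symm

variable {X : Set (Config A)} {f : Config A → Config A} {r P b : ℕ} {x z : Config A} {I : Set ℤ}

theorem IsPointedSFT.mem_of_windowsOccur (hX : IsPointedSFT X r) (hx : x ∈ X)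
    (h : WindowsOccur r (Function.curry z) (Function.curry x)) : z ∈ X := by
  refine hX.mem_of_local z fun v => ?_
  obtain ⟨s, hs⟩ := h v.1
  refine ⟨shift (s, 0) x, hX.shift_mem _ x hx, fun u hu => ?_⟩
  rw [shift_apply, show u + (s, 0) = (u.1 + s, u.2) by ext <;> simp]
  exact congr_fun (hs u.1 hu.1) u.2

theorem support_subset_rows_of_windowsOccur (hx : support x ⊆ rows b)
    (h : WindowsOccur r (Function.curry z) (Function.curry x)) : support z ⊆ rows b := by
  intro v hv
  obtain ⟨j, hj⟩ := h.exists_apply_eq v.1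
  have hvj : z v = x (j, v.2) := congr_fun hj v.2
  exact @hx (j, v.2) (by rwa [mem_support, ← hvj])

theorem IsPointedSFT.exists_periodicBands_eqOn (hX : IsPointedSFT X r) (hx : x ∈ X)
    (hb : support x ⊆ rows b) (hP : 0 < P) {a : ℤ} (hI : Icc (a - r) (a + P - 1 + r) ⊆ I)
    (h : PeriodicOn P (Function.curry x) I) :
    ∃ q ∈ periodicBands X P, EqOn q x (Prod.fst ⁻¹' I) ∧ support q ⊆ rows b := by
  obtain ⟨g, hper, heq, hwin⟩ := h.exists_periodic hP hI
  have hsupp := support_subset_rows_of_windowsOccur (z := Function.uncurry g) hb hwin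
  refine ⟨Function.uncurry g, ⟨hX.mem_of_windowsOccur hx hwin, fun v => ?_, b, hsupp⟩,
    fun v hv => congr_fun (heq hv) v.2, hsupp⟩
  rw [show v + ((P : ℤ), 0) = (v.1 + P, v.2) by ext <;> simp]
  exact congr_fun (hper v.1) v.2

end Columns

section Transpose

variable {X : Set (Config A)} {f : Config A → Config A} {r : ℕ}

/-- The reflection of a configuration in the diagonal. -/
def transpose (x : Config A) : Config A := x ∘ Prod.swap

@[simp]
theorem transpose_apply (x : Config A) (v : ℤ × ℤ) : transpose x v = x v.swap := rfl

@[simp]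
theorem transpose_transpose (x : Config A) : transpose (transpose x) = x := by
  ext v
  simp

theorem transpose_shift (w : ℤ × ℤ) (x : Config A) :
    transpose (shift w x) = shift w.swap (transpose x) := by
  ext v
  simp

theorem swap_mem_box {u v : ℤ × ℤ} : u.swap ∈ box v.swap r ↔ u ∈ box v r := and_comm

theorem eqOn_transpose {x y : Config A} {v : ℤ × ℤ} (h : EqOn x y (box v r)) :
    EqOn (transpose x) (transpose y) (box v.swap r) :=
  fun u hu => h (by rwa [← swap_mem_box, Prod.swap_swap])

theorem iterate_transpose (f : Config A → Config A) (n : ℕ) (x : Config A) :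
    (transpose ∘ f ∘ transpose)^[n] (transpose x) = transpose (f^[n] x) :=
  ((show Semiconj transpose f (transpose ∘ f ∘ transpose) from fun x => by simp).iterate_right
    n x).symm

variable [Zero A]

theorem IsQuiescentCA.conj_transpose (hf : IsQuiescentCA X f r) :
    IsQuiescentCA (transpose ⁻¹' X) (transpose ∘ f ∘ transpose) r where
  zero_mem := hf.zero_mem
  shift_mem w x hx := by
    rw [mem_preimage, transpose_shift]
    exact hf.shift_mem _ _ hx
  mem_of_local x hx := hf.mem_of_local _ fun v => by
    obtain ⟨y, hy, hxy⟩ := hx v.swap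
    exact ⟨_, hy, eqOn_transpose hxy⟩
  mapsTo x hx := by
    rw [mem_preimage, comp_apply, transpose_transpose]
    exact hf.mapsTo hx
  map_shift w x hx := by
    simp only [comp_apply, transpose_shift, hf.map_shift _ _ hx, Prod.swap_swap]
  map_zero := by
    change transpose (f 0) = 0
    rw [hf.map_zero]
    rfl
  map_local x hx y hy v h := hf.map_local _ hx _ hy _ (eqOn_transpose h)

theorem AsymptoticallyNilpotent.conj_transpose (hnil : AsymptoticallyNilpotent X f) :
    AsymptoticallyNilpotent (transpose ⁻¹' X) (transpose ∘ f ∘ transpose) := by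
  intro x hx v
  filter_upwards [hnil _ hx v.swap] with n hn
  rw [← transpose_transpose x, iterate_transpose, transpose_apply, hn]

end Transpose

section FinitePoints

variable [Zero A] {X : Set (Config A)} {f : Config A → Config A} {r : ℕ}

/-- The points of `X` with finitely many nonzero symbols. -/
def finitePoints (X : Set (Config A)) : Set (Config A) := {x ∈ X | (support x).Finite}

theorem IsQuiescentCA.gluingFamily_finitePoints (hf : IsQuiescentCA X f r) :
    GluingFamily X f r (finitePoints X) where
  subset := sep_subset X _
  zero_mem := ⟨hf.zero_mem, by simp⟩
  shift_mem w x hx :=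
    ⟨hf.shift_mem w x hx.1, hx.2.preimage (add_left_injective w).injOn⟩
  mapsTo x hx := ⟨hf.mapsTo hx.1,
    (hx.2.biUnion fun v _ => finite_box v r).subset (hf.support_map_subset hx.1)⟩
  superpose_mem u hu y hy hsep := ⟨hf.superpose_mem hu.1 hy.1 hsep,
    (hu.2.union hy.2).subset (support_superpose_subset u y)⟩
  exists_separated u hu d := by
    obtain ⟨b, hb⟩ := exists_subset_box_zero hu.2
    exact ⟨b + d, fun y _ hy v hv => hy.mono (box_subset_box_add (hb hv))⟩

theorem IsPointedSFT.exists_periodicBands_of_support_subset_box (hX : IsPointedSFT X r)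
    {w : Config A} (hw : w ∈ X) {c : ℕ} (hc : support w ⊆ box 0 c) :
    ∃ W ∈ periodicBands X (2 * (c + r + 1)), support W ⊆ rows c ∧ EqOn W w (box 0 c) ∧
      ∀ (k : ℤ) (v : ℤ × ℤ), |v.1 - (2 * k + 1) * (c + r + 1)| ≤ r → W v = 0 := by
  have hzero (i : ℤ) (hi : c < |i|) : Function.curry w i = 0 := funext fun j => by
    by_contra hne
    have := (mem_box_zero.1 (hc hne)).1
    rw [lt_abs] at hi
    omega
  have hper : PeriodicOn (2 * (c + r + 1)) (Function.curry w)
      (Icc (-(c + 2 * r + 1)) (c + 2 * r + 1)) := by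
    rintro i ⟨hi₁, hi₂⟩ j ⟨hj₁, hj₂⟩ hij
    obtain ⟨k, hk⟩ := hij.symm.dvd
    push_cast at hk
    obtain hk' | rfl | hk' : k ≤ -1 ∨ k = 0 ∨ 1 ≤ k := by omega
    · rw [hzero i (lt_abs.2 (by right; nlinarith)), hzero j (lt_abs.2 (by left; nlinarith))]
    · rw [show i = j by linarith]
    · rw [hzero i (lt_abs.2 (by left; nlinarith)), hzero j (lt_abs.2 (by right; nlinarith))]
  obtain ⟨W, hW, heq, hrows⟩ := hX.exists_periodicBands_eqOn hw
    (hc.trans (box_zero_subset_rows c)) (by omega) (a := -(c + r + 1))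
    (Icc_subset_Icc (by linarith) (by push_cast; linarith)) hper
  refine ⟨W, hW, hrows, fun v hv => heq ?_, fun k v hv => ?_⟩
  · rw [mem_box_zero] at hv
    exact ⟨by omega, by omega⟩
  · rw [abs_le] at hv
    have hv' : v - k • (((2 * (c + r + 1) : ℕ) : ℤ), (0 : ℤ)) =
        (v.1 - k * (2 * (c + r + 1)), v.2) := by
      ext <;> simp
    rw [← hW.2.1.sub_zsmul_eq k, hv', heq ⟨by linarith, by linarith⟩]
    exact congr_fun (hzero _ (lt_abs.2 (by left; linarith))) v.2

variable [TopologicalSpace A] [DiscreteTopology A]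

theorem IsPointedSFT.mem_closure_finitePoints (hX : IsPointedSFT X r) {x : Config A} (hx : x ∈ X)
    {b : ℕ} (hb : support x ⊆ rows b)
    (h : ∀ L : ℕ, ∃ g : ℕ, L ≤ g ∧ ZeroOnBoundary r (cols g) x) : x ∈ closure (finitePoints X) := by
  refine mem_closure_config.2 fun L => ?_
  obtain ⟨g, hLg, hg⟩ := h L
  refine ⟨(cols g).indicator x, ⟨hX.indicator_mem hx hg, (finite_box 0 (max g b)).subset ?_⟩,
    fun v hv => indicator_of_mem ?_ x⟩
  · rw [support_indicator]
    rintro v ⟨hvg, hvx⟩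
    have hvb := hb hvx
    rw [mem_cols] at hvg
    rw [mem_rows] at hvb
    exact mem_box_zero.2 (by omega)
  · rw [mem_box_zero] at hv
    exact mem_cols.2 (by omega)

theorem IsPointedSFT.superpose_mem_closure_finitePoints (hX : IsPointedSFT X r) {W y : Config A}
    (hx : superpose W y ∈ X) {c : ℕ} (hW : support W ⊆ rows c) {h : ℤ} (hh : 0 < h)
    (hgap : ∀ (k : ℤ) (v : ℤ × ℤ), |v.1 - (2 * k + 1) * h| ≤ r → W v = 0)
    (hy : (support y).Finite) : superpose W y ∈ closure (finitePoints X) := by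
  obtain ⟨b, hb⟩ := exists_subset_box_zero hy
  have hsupp : support (superpose W y) ⊆ rows (max c b) :=
    (support_superpose_subset W y).trans (union_subset
      (hW.trans (rows_subset_rows (le_max_left c b)))
      ((hb.trans (box_zero_subset_rows b)).trans (rows_subset_rows (le_max_right c b))))
  have hzero (k : ℤ) (hk : b + r < |(2 * k + 1) * h|) (v : ℤ × ℤ)
      (hv : |v.1 - (2 * k + 1) * h| ≤ r) : superpose W y v = 0 := by
    rw [superpose_apply_of_left (hgap k v hv)]
    by_contra hne
    have := (mem_box_zero.1 (hb hne)).1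
    rw [abs_le] at hv
    rw [lt_abs] at hk
    omega
  refine hX.mem_closure_finitePoints hx hsupp fun L => ?_
  obtain ⟨g, hg⟩ : ∃ g : ℕ, (g : ℤ) = (2 * (b + L + r) + 1) * h :=
    ⟨_, Int.toNat_of_nonneg (by positivity)⟩
  have hlt : (b + L + r : ℤ) < g := by nlinarith
  have hg' : -(g : ℤ) = (2 * (-(b + L + r) - 1) + 1) * h := by rw [hg]; ring
  refine ⟨g, by omega, zeroOnBoundary_preimage_Icc (fun _ _ h => h.1) ?_ ?_⟩
  · rw [hg']
    exact hzero _ (by rw [← hg', abs_neg, Nat.abs_cast]; omega)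
  · rw [hg]
    exact hzero _ (by rw [← hg, Nat.abs_cast]; omega)

variable [Finite A]

/-- Baire provides a word that forces zeros. A horizontally periodic row of copies of this word is
inserted in the empty rows of `y`; it does not affect the orbit of `y` in the long run, because
periodic bands die. -/
theorem AsymptoticallyNilpotent.exists_empty_rows (hnil : AsymptoticallyNilpotent X f)
    (hf : IsQuiescentCA X f r) : ∃ K N : ℕ, ∀ y ∈ finitePoints X, EqOn y 0 (rows K) →
      ∀ n ≥ N, f^[n] y 0 = 0 := by
  have hF := hf.gluingFamily_finitePoints
  obtain ⟨w, hw, l, N, hN⟩ := hnil.exists_uniform_cylinder hf hF.subset ⟨0, hF.zero_mem⟩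
    (finite_singleton (0 : ℤ × ℤ))
  obtain ⟨c, hc⟩ := exists_subset_box_zero (hw.2.union (finite_box 0 l))
  rw [union_subset_iff] at hc
  obtain ⟨W, hW, hWc, hWw, hWgap⟩ := hf.exists_periodicBands_of_support_subset_box hw.1 hc.1
  obtain ⟨m, hm⟩ := hnil.exists_iterate_periodicBands_eq_zero hf
    (show 0 < 2 * (c + r + 1) by omega)
  obtain ⟨K, hK⟩ : ∃ K, K = c + 2 * ((m + 1) * r) := ⟨_, rfl⟩
  refine ⟨K, max N m, fun y hy hyK n hn => ?_⟩
  have hsep : Separated (2 * ((m + 1) * r)) W y :=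
    fun v hv => hyK.mono (hK ▸ box_subset_rows_add (hWc hv))
  have hxX : superpose W y ∈ X :=
    hf.superpose_mem hW.1 hy.1 (hsep.mono (by nlinarith))
  have hxW : EqOn (superpose W y) W (rows K) :=
    fun v hv => superpose_apply_of_right (hyK hv)
  have hcK : box 0 c ⊆ rows K := (box_zero_subset_rows c).trans (rows_subset_rows (by omega))
  have hcl := hf.superpose_mem_closure_finitePoints hxX hWc (by omega) hWgap hy.2
  rw [← hf.iterate_superpose_eq hW.1 hy.1 (hm W hW) hsep (le_of_max_le_right hn)]
  refine hN _ hcl (fun v hv => ?_) n (le_of_max_le_left hn) rfl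
  rw [hxW (hcK (hc.2 hv)), hWw (hc.2 hv)]

theorem AsymptoticallyNilpotent.exists_support_iterate_subset_rows
    (hnil : AsymptoticallyNilpotent X f) (hf : IsQuiescentCA X f r) :
    ∃ K N : ℕ, ∀ y ∈ finitePoints X, ∀ b, support y ⊆ rows b →
      ∀ n ≥ N, support (f^[n] y) ⊆ rows (b + K) := by
  obtain ⟨K, N, hN⟩ := hnil.exists_empty_rows hf
  refine ⟨K, N, fun y hy b hb n hn v hv => by_contra fun hvK => hv ?_⟩
  have hempty : EqOn (shift v y) 0 (rows K) := fun u hu => by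
    by_contra hne
    have := hb hne
    simp only [mem_rows, Prod.snd_add] at hu hvK this
    omega
  have := hN _ (hf.gluingFamily_finitePoints.shift_mem v y hy) hempty n hn
  rwa [(hf.iterate n).map_shift v y hy.1, shift_apply, zero_add] at this

theorem AsymptoticallyNilpotent.exists_support_iterate_subset_cols
    (hnil : AsymptoticallyNilpotent X f) (hf : IsQuiescentCA X f r) :
    ∃ K N : ℕ, ∀ y ∈ finitePoints X, ∀ b, support y ⊆ cols b →
      ∀ n ≥ N, support (f^[n] y) ⊆ cols (b + K) := by
  obtain ⟨K, N, hN⟩ := hnil.conj_transpose.exists_support_iterate_subset_rows hf.conj_transpose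
  refine ⟨K, N, fun y hy b hb n hn v hv => ?_⟩
  have hfin : transpose y ∈ finitePoints (transpose ⁻¹' X) :=
    ⟨by simpa using hy.1, hy.2.preimage Prod.swap_injective.injOn⟩
  have := hN _ hfin b (fun v hv => hb hv) n hn
  rw [iterate_transpose] at this
  exact @this v.swap (by simpa using hv)

theorem AsymptoticallyNilpotent.mortal_finitePoints (hnil : AsymptoticallyNilpotent X f)
    (hf : IsQuiescentCA X f r) : GluingFamily.mortal f (finitePoints X) = finitePoints X := by
  refine sep_eq_self_iff_mem_true.2 fun y hy => ?_
  obtain ⟨K, N, hrows⟩ := hnil.exists_support_iterate_subset_rows hf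
  obtain ⟨K', N', hcols⟩ := hnil.exists_support_iterate_subset_cols hf
  obtain ⟨b, hb⟩ := exists_subset_box_zero hy.2
  obtain ⟨n, hn, hN, hN'⟩ := ((hnil.eventually_eqOn hy.1 (finite_box 0 (b + max K K'))).and
    ((eventually_ge_atTop N).and (eventually_ge_atTop N'))).exists
  refine ⟨n, funext fun v => by_contra fun hv => hv (hn ?_)⟩
  have hvrow := hrows y hy b (hb.trans (box_zero_subset_rows b)) n hN hv
  have hvcol := hcols y hy b (hb.trans (box_zero_subset_cols b)) n hN' hv
  rw [mem_rows] at hvrow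
  rw [mem_cols] at hvcol
  exact mem_box_zero.2 (by omega)

theorem AsymptoticallyNilpotent.exists_iterate_finitePoints_eq_zero
    (hnil : AsymptoticallyNilpotent X f) (hf : IsQuiescentCA X f r) :
    ∃ T, ∀ y ∈ finitePoints X, f^[T] y = 0 := by
  simpa only [hnil.mortal_finitePoints hf] using hf.gluingFamily_finitePoints.exists_uniform hf hnil

end FinitePoints

section Gluing

variable [Zero A] {X : Set (Config A)} {f : Config A → Config A} {r R : ℕ}

/-- The instance of block gluing used here: the restriction of a point of `X` to a strip extends to
a point of `X` that vanishes at distance at least `R` from the strip. -/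
def ExtendsByZero (X : Set (Config A)) (R : ℕ) : Prop :=
  ∀ x ∈ X, ∀ L : ℕ, (∃ y ∈ X, EqOn y x (cols L) ∧ ∀ v : ℤ × ℤ, (L + R : ℤ) ≤ |v.1| → y v = 0) ∧
    ∃ y ∈ X, EqOn y x (rows L) ∧ ∀ v : ℤ × ℤ, (L + R : ℤ) ≤ |v.2| → y v = 0

theorem ExtendsByZero.exists_extension (hglue : ExtendsByZero X R) {x : Config A} (hx : x ∈ X)
    (L : ℕ) : ∃ y ∈ X, EqOn y x (box 0 L) ∧ support y ⊆ rows (L + R) ∧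
      ∀ v ∈ rows L, (L + R : ℤ) ≤ |v.1| → y v = 0 := by
  obtain ⟨z, hz, hzx, hz0⟩ := (hglue x hx L).1
  obtain ⟨y, hy, hyz, hy0⟩ := (hglue z hz L).2
  refine ⟨y, hy, fun v hv => ?_, fun v hv => ?_, fun v hv hvL => ?_⟩
  · rw [hyz (box_zero_subset_rows L hv), hzx (box_zero_subset_cols L hv)]
  · have : ¬((L + R : ℤ) ≤ |v.2|) := fun h => hv (hy0 v h)
    rw [not_le, abs_lt] at this
    rw [mem_rows]
    omega
  · rw [hyz hv, hz0 v hvL]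

theorem ExtendsByZero.exists_periodicOn_extension [Finite A] (hglue : ExtendsByZero X R)
    (hX : IsPointedSFT X r) : ∃ P > 0, ∀ x ∈ X, ∀ L : ℕ, ∃ y ∈ X, EqOn y x (box 0 L) ∧
      (∃ b, support y ⊆ rows b) ∧ ∃ s : ℤ, PeriodicOn P (Function.curry y) (Ici s) ∧
        PeriodicOn P (Function.curry y) (Iic (-s)) := by
  obtain ⟨P, hP, hfold⟩ := exists_periodicOn_tails (B := ℤ → A) (Nat.card A ^ (2 * R)) r
  refine ⟨P, hP, fun x hx L => ?_⟩
  obtain ⟨z, hz, hzx, hzrows, hz0⟩ := hglue.exists_extension hx L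
  let S : Finset ℤ := Finset.Ico (-(L + R)) (-L) ∪ Finset.Ioc (L : ℤ) (L + R)
  have hS : S.card ≤ 2 * R := (Finset.card_union_le _ _).trans (by simp; omega)
  obtain ⟨C, hC, hCS⟩ := exists_finset_support_subset (A := A) S
  have htails (i : ℤ) (hi : ((L + R : ℕ) : ℤ) ≤ |i|) : Function.curry z i ∈ C :=
    hCS _ fun j hj => by
      have hjrows := hzrows (show (i, j) ∈ support z from hj)
      have hjL : (i, j) ∉ rows L := fun h => hj (hz0 _ h (by exact_mod_cast hi))
      rw [mem_rows] at hjrows hjL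
      simp only [S, Finset.coe_union, Finset.coe_Ico, Finset.coe_Ioc, mem_union, mem_Ico, mem_Ioc]
      omega
  obtain ⟨g, hgz, hwin, s, hs⟩ := hfold C
    (hC.trans (Nat.pow_le_pow_right Nat.card_pos hS)) (Function.curry z) (L + R) htails
  refine ⟨Function.uncurry g, hX.mem_of_windowsOccur hz hwin, fun v hv => ?_,
    ⟨_, support_subset_rows_of_windowsOccur hzrows hwin⟩, s, hs⟩
  rw [← hzx hv]
  rw [mem_box_zero] at hv
  exact congr_fun (hgz ⟨by push_cast; omega, by push_cast; omega⟩) v.2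

theorem IsQuiescentCA.iterate_apply_eq_zero_of_periodicOn (hf : IsQuiescentCA X f r) {P M b : ℕ}
    (hP : 0 < P) (hM : ∀ q ∈ periodicBands X P, f^[M] q = 0) {x : Config A} (hx : x ∈ X)
    (hb : support x ⊆ rows b) {I : Set ℤ} {a : ℤ} (hI : Icc (a - r) (a + P - 1 + r) ⊆ I)
    (h : PeriodicOn P (Function.curry x) I) {v : ℤ × ℤ}
    (hv : Icc (v.1 - ((M + 1) * r : ℕ)) (v.1 + ((M + 1) * r : ℕ)) ⊆ I) : f^[M] x v = 0 := by
  obtain ⟨q, hq, hqx, -⟩ := hf.exists_periodicBands_eqOn hx hb hP hI h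
  rw [(hf.iterate M).map_local x hx q hq.1 v fun u hu => (hqx (hv hu.1)).symm, hM q hq,
    Pi.zero_apply]

theorem IsQuiescentCA.iterate_mem_finitePoints (hf : IsQuiescentCA X f r) {P M b : ℕ}
    (hP : 0 < P) (hM : ∀ q ∈ periodicBands X P, f^[M] q = 0) {x : Config A} (hx : x ∈ X)
    (hb : support x ⊆ rows b) {s : ℤ} (hright : PeriodicOn P (Function.curry x) (Ici s))
    (hleft : PeriodicOn P (Function.curry x) (Iic (-s))) : f^[M] x ∈ finitePoints X := by
  refine ⟨(hf.iterate M).mapsTo hx,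
    (finite_box 0 (s.natAbs + (b + (M + 1) * r))).subset fun v hv => ?_⟩
  have hvrows := (hf.iterate M).support_map_subset_rows hx hb hv
  have hvr : v.1 < s + ((M + 1) * r : ℕ) := by
    by_contra! h
    refine hv (hf.iterate_apply_eq_zero_of_periodicOn hP hM hx hb (a := s + r)
      (fun i hi => ?_) hright fun i hi => ?_)
    · exact mem_Ici.2 (by linarith [hi.1])
    · exact mem_Ici.2 (by linarith [hi.1])
  have hvl : -s - ((M + 1) * r : ℕ) < v.1 := by
    by_contra! h
    refine hv (hf.iterate_apply_eq_zero_of_periodicOn hP hM hx hb (a := -s - P + 1 - r)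
      (fun i hi => ?_) hleft fun i hi => ?_)
    · exact mem_Iic.2 (by linarith [hi.2])
    · exact mem_Iic.2 (by linarith [hi.2])
  rw [mem_rows] at hvrows
  rw [mem_box_zero]
  omega

theorem AsymptoticallyNilpotent.exists_iterate_eq_zero [Finite A] [TopologicalSpace A]
    [DiscreteTopology A] (hnil : AsymptoticallyNilpotent X f) (hf : IsQuiescentCA X f r)
    (hglue : ExtendsByZero X R) : ∃ n, ∀ x ∈ X, f^[n] x = 0 := by
  obtain ⟨P, hP, hext⟩ := hglue.exists_periodicOn_extension hf.toIsPointedSFT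
  obtain ⟨M, hM⟩ := hnil.exists_iterate_periodicBands_eq_zero hf hP
  obtain ⟨T, hT⟩ := hnil.exists_iterate_finitePoints_eq_zero hf
  refine ⟨T + M, (hf.iterate _).eq_zero_of_apply_zero subset_rfl hf.shift_mem fun x hx => ?_⟩
  obtain ⟨y, hy, hyx, ⟨b, hb⟩, s, hright, hleft⟩ := hext x hx ((T + M + 1) * r)
  calc f^[T + M] x 0 = f^[T + M] y 0 := (hf.iterate _).map_local x hx y hy 0 hyx.symm
    _ = f^[T] (f^[M] y) 0 := by rw [iterate_add_apply]
    _ = 0 := by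
      rw [hT _ (hf.iterate_mem_finitePoints hP hM hy hb hright hleft), Pi.zero_apply]

end Gluing

section BlockGluing

variable [Zero A] {X : Set (Config A)} {R : ℕ}

theorem exists_eqOn_strip_of_gluing {φ : ℤ × ℤ → ℤ}
    (hglue : ∀ I J : Set ℤ, I.OrdConnected → J.OrdConnected →
      (∀ a ∈ I, ∀ b ∈ J, (R : ℤ) ≤ |a - b|) → ∀ p ∈ X, ∀ q ∈ X,
        ∃ y ∈ X, EqOn y p (φ ⁻¹' I) ∧ EqOn y q (φ ⁻¹' J))
    (h0 : 0 ∈ X) {x : Config A} (hx : x ∈ X) (L : ℕ) :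
    ∃ y ∈ X, EqOn y x (φ ⁻¹' Icc (-L) L) ∧ ∀ v, (L + R : ℤ) ≤ |φ v| → y v = 0 := by
  obtain ⟨z, hz, hzx, hz0⟩ := hglue (Iic L) (Ici (L + R)) ordConnected_Iic ordConnected_Ici
    (fun a ha b hb => le_abs.2 (by rw [mem_Iic] at ha; rw [mem_Ici] at hb; omega)) x hx 0 h0
  obtain ⟨y, hy, hyz, hy0⟩ := hglue (Ici (-L)) (Iic (-L - R)) ordConnected_Ici ordConnected_Iic
    (fun a ha b hb => le_abs.2 (by rw [mem_Ici] at ha; rw [mem_Iic] at hb; omega)) z hz 0 h0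
  refine ⟨y, hy, fun v hv => (hyz hv.1).trans (hzx hv.2), fun v hv => ?_⟩
  rcases le_abs.1 hv with h | h
  · exact (hyz (show -(L : ℤ) ≤ φ v by omega)).trans (hz0 h)
  · exact hy0 (show φ v ≤ -L - R by omega)

theorem extendsByZero_of_blockGluing
    (hglue : ∀ S T : Set (ℤ × ℤ),
      (∃ I J : Set ℤ, I.OrdConnected ∧ J.OrdConnected ∧ S = I ×ˢ J) →
      (∃ I J : Set ℤ, I.OrdConnected ∧ J.OrdConnected ∧ T = I ×ˢ J) →
      (∀ a ∈ S, ∀ b ∈ T, (R : ℤ) ≤ max |a.1 - b.1| |a.2 - b.2|) →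
      ∀ p ∈ X, ∀ q ∈ X, ∃ x ∈ X, EqOn x p S ∧ EqOn x q T)
    (h0 : 0 ∈ X) : ExtendsByZero X R := by
  refine fun x hx L => ⟨exists_eqOn_strip_of_gluing (φ := Prod.fst) ?_ h0 hx L,
    exists_eqOn_strip_of_gluing (φ := Prod.snd) ?_ h0 hx L⟩
  · exact fun I J hI hJ hIJ => hglue _ _ ⟨I, univ, hI, ordConnected_univ, prod_univ.symm⟩
      ⟨J, univ, hJ, ordConnected_univ, prod_univ.symm⟩
      fun a ha b hb => le_max_of_le_left (hIJ _ ha _ hb)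
  · exact fun I J hI hJ hIJ => hglue _ _ ⟨univ, I, ordConnected_univ, hI, univ_prod.symm⟩
      ⟨univ, J, ordConnected_univ, hJ, univ_prod.symm⟩
      fun a ha b hb => le_max_of_le_right (hIJ _ ha _ hb)

end BlockGluing

section CurtisHedlundLyndon

theorem exists_isPointedSFT_of_forbidden [Zero A] {X : Set (Config A)} {D : Finset (ℤ × ℤ)}
    {F : Set (D → A)} (hX : X = {x | ∀ v : ℤ × ℤ, (fun d : D => x (v + d)) ∉ F})
    (h0 : 0 ∈ X) : ∃ r, IsPointedSFT X r := by
  obtain ⟨r, hr⟩ := exists_subset_box_zero D.finite_toSet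
  subst hX
  refine ⟨r, h0, fun w x hx v => ?_, fun x hx v => ?_⟩
  · simpa only [shift_apply, add_right_comm] using hx (v + w)
  · obtain ⟨y, hy, hxy⟩ := hx v
    have hwindow : (fun d : D => x (v + d)) = fun d : D => y (v + d) := by
      ext d
      refine hxy ?_
      have hd := mem_box_zero.1 (hr d.2)
      simp only [mem_box, Prod.fst_add, Prod.snd_add]
      omega
    rw [hwindow]
    exact hy v

variable [TopologicalSpace A] [DiscreteTopology A] {X : Set (Config A)}
  {f : Config A → Config A} {r : ℕ}

theorem exists_radius_of_isCompact (hX : IsCompact X) (hf : ContinuousOn f X) (v : ℤ × ℤ) :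
    ∃ l, ∀ x ∈ X, ∀ y ∈ X, EqOn x y (box 0 l) → f x v = f y v := by
  suffices ∃ l, ∀ x ∈ X, ∀ y ∈ X, EqOn y x (box 0 l) → f y v = f x v from
    this.imp fun l hl x hx y hy h => hl y hy x hx h
  refine hX.induction_on (p := fun s => ∃ l, ∀ x ∈ s, ∀ y ∈ X, EqOn y x (box 0 l) →
    f y v = f x v) ⟨0, by simp⟩ (fun s t hst ⟨l, hl⟩ => ⟨l, fun x hx => hl x (hst hx)⟩) ?_ ?_
  · rintro s t ⟨l, hl⟩ ⟨m, hm⟩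
    refine ⟨max l m, fun x hx y hy h => hx.elim (fun hx => hl x hx y hy ?_)
      fun hx => hm x hx y hy ?_⟩
    exacts [h.mono (box_subset_box (le_max_left l m)), h.mono (box_subset_box (le_max_right l m))]
  · intro x hx
    have hfx : {y | f y v = f x v} ∈ 𝓝[X] x :=
      (continuousOn_pi.1 hf v x hx) ((isOpen_discrete {f x v}).mem_nhds rfl)
    have hbasis := nhdsWithin_hasBasis (hasBasis_nhds_config x) X
    obtain ⟨l, -, hl⟩ := hbasis.mem_iff.1 hfx
    refine ⟨_, hbasis.mem_of_mem (i := l) trivial, l, fun z hz y hy hyz => ?_⟩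
    exact (hl ⟨hyz.trans hz.1, hy⟩).trans (hl hz).symm

theorem IsPointedSFT.exists_isQuiescentCA [Zero A] [Finite A] (hX : IsPointedSFT X r)
    (hmaps : MapsTo f X X) (hcont : ContinuousOn f X)
    (hshift : ∀ w, ∀ x ∈ X, f (shift w x) = shift w (f x)) (h0 : f 0 = 0) :
    ∃ s, IsQuiescentCA X f s := by
  obtain ⟨l, hl⟩ := exists_radius_of_isCompact hX.isClosed.isCompact hcont 0
  refine ⟨max r l, { __ := hX.mono (le_max_left r l)
                     mapsTo := hmaps
                     map_shift := hshift
                     map_zero := h0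
                     map_local := fun x hx y hy v hxy => ?_ }⟩
  have hlocal := hl _ (hX.shift_mem v x hx) _ (hX.shift_mem v y hy)
    (eqOn_shift.2 (by simpa using hxy.mono (box_subset_box (le_max_right r l))))
  simpa [hshift v x hx, hshift v y hy] using hlocal

end CurtisHedlundLyndon

theorem isFixedPt_of_tendsto_iterate_of_continuousWithinAt {α : Type*} [TopologicalSpace α]
    [T2Space α] {f : α → α} {s : Set α} {x y : α} (hf : ContinuousWithinAt f s y)
    (hmaps : MapsTo f s s) (hx : x ∈ s) (h : Tendsto (fun n => f^[n] x) atTop (𝓝 y)) :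
    IsFixedPt f y := by
  have hs : Tendsto (fun n => f^[n] x) atTop (𝓝[s] y) :=
    tendsto_nhdsWithin_iff.2 ⟨h, .of_forall fun n => hmaps.iterate n hx⟩
  refine tendsto_nhds_unique (hf.tendsto.comp hs) ?_
  simpa only [comp_def, ← iterate_succ_apply'] using h.comp (tendsto_add_atTop_nat 1)

theorem asymptoticallyNilpotent_of_tendsto [Zero A] [TopologicalSpace A] [DiscreteTopology A]
    {X : Set (Config A)} {f : Config A → Config A}
    (h : ∀ x ∈ X, Tendsto (fun n => f^[n] x) atTop (𝓝 0)) : AsymptoticallyNilpotent X f :=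
  fun x hx v => (tendsto_pi_nhds.1 (h x hx) v).eventually ((isOpen_discrete {0}).mem_nhds rfl)

end PlaneShift

open PlaneShift in
theorem statement15_general {A : Type*} [Zero A] [Finite A] [TopologicalSpace A]
    [DiscreteTopology A] (X : Set (ℤ × ℤ → A)) (D : Finset (ℤ × ℤ)) (Fbd : Set (D → A))
    (hSFT : X = {x | ∀ v : ℤ × ℤ, (fun d : D => x (v + d)) ∉ Fbd}) (h0 : 0 ∈ X)
    (R : ℕ) (hglue : ExtendsByZero X R) (f : (ℤ × ℤ → A) → (ℤ × ℤ → A))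
    (hmaps : Set.MapsTo f X X) (hfc : ContinuousOn f X)
    (hfeq : ∀ v : ℤ × ℤ, ∀ x ∈ X, f (fun u => x (u - v)) = fun u => f x (u - v))
    (hAN : ∀ x ∈ X, Filter.Tendsto (fun n => f^[n] x) Filter.atTop (nhds 0)) :
    ∃ n : ℕ, ∀ x ∈ X, f^[n] x = 0 := by
  obtain ⟨r, hX⟩ := exists_isPointedSFT_of_forbidden hSFT h0
  have hshift (w : ℤ × ℤ) (x : Config A) (hx : x ∈ X) : f (shift w x) = shift w (f x) := by
    have h := hfeq (-w) x hx
    simp only [sub_neg_eq_add] at h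
    exact h
  have hf0 : f 0 = 0 :=
    isFixedPt_of_tendsto_iterate_of_continuousWithinAt (hfc 0 h0) hmaps h0 (hAN 0 h0)
  obtain ⟨s, hf⟩ := hX.exists_isQuiescentCA hmaps hfc hshift hf0
  exact (asymptoticallyNilpotent_of_tendsto hAN).exists_iterate_eq_zero hf hglue

/-- a block-gluing `ℤ²`-subshift of finite type containing the all-`a₀`
configuration is nil-rigid: every continuous shift-commuting self-map `f` of `X` with
`fⁿ(x) → a₀^{ℤ²}` for all `x ∈ X` satisfies `fⁿ(X) = {a₀^{ℤ²}}` for some `n`. -/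
theorem statement15 {A : Type} [Finite A] [TopologicalSpace A] [DiscreteTopology A]
    (a₀ : A)
    (X : Set ((ℤ × ℤ) → A))
    -- `X` is a subshift of finite type, defined by forbidden patterns `Fbd` on the
    -- finite shape `D`:
    (D : Finset (ℤ × ℤ)) (Fbd : Set (↥D → A))
    (hSFT : X = {x : (ℤ × ℤ) → A | ∀ v : ℤ × ℤ, (fun d : ↥D => x (v + ↑d)) ∉ Fbd})
    (h0 : (fun _ => a₀) ∈ X)
    -- `X` is block-gluing with gluing constant `R`: patterns of points of `X` on
    -- rectangles (products of order-connected subsets of `ℤ`) at `ℓ∞`-distance at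
    -- least `R` can be combined into a single point of `X`:
    (R : ℕ)
    (hglue : ∀ S T : Set (ℤ × ℤ),
      (∃ I J : Set ℤ, I.OrdConnected ∧ J.OrdConnected ∧ S = I ×ˢ J) →
      (∃ I J : Set ℤ, I.OrdConnected ∧ J.OrdConnected ∧ T = I ×ˢ J) →
      (∀ a ∈ S, ∀ b ∈ T, (R : ℤ) ≤ max |a.1 - b.1| |a.2 - b.2|) →
      ∀ p ∈ X, ∀ q ∈ X, ∃ x ∈ X, (∀ v ∈ S, x v = p v) ∧ (∀ v ∈ T, x v = q v))
    -- `f` is a continuous self-map of `X` commuting with the shift action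
    -- `(v·x)(u) = x(u - v)`:
    (f : ((ℤ × ℤ) → A) → ((ℤ × ℤ) → A))
    (hmaps : Set.MapsTo f X X)
    (hfc : ContinuousOn f X)
    (hfeq : ∀ (v : ℤ × ℤ), ∀ x ∈ X, f (fun u => x (u - v)) = fun u => f x (u - v))
    (hAN : ∀ x ∈ X,
      Filter.Tendsto (fun n => f^[n] x) Filter.atTop (nhds fun _ => a₀)) :
    ∃ n : ℕ, ∀ x ∈ X, f^[n] x = fun _ => a₀ := by
  let : Zero A := ⟨a₀⟩
  exact statement15_general X D Fbd hSFT h0 R (PlaneShift.extendsByZero_of_blockGluing hglue h0)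
    f hmaps hfc hfeq hAN
end

section
/- Say a group G is nil-rigid if for every expansive 0-gluing pointed dynamical system (G, X, 0) in which the homoclinic points are dense, every asymptotically nilpotent endomorphism of (G, X, 0) is nilpotent. If every finitely generated subgroup of a group G is nil-rigid, then G is nil-rigid. -/
/-- A point `x` is homoclinic: `g • x` is eventually close to `x₀` outside finite
subsets of `G`. -/
def Homoclinic (G : Type) [Group G] {X : Type} [MetricSpace X] [MulAction G X]
    (x₀ x : X) : Prop :=
  ∀ ε : ℝ, 0 < ε → ∃ E : Finset G, ∀ g : G, g ∉ E → dist (g • x) x₀ < ε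

/-- The `0`-gluing property of a pointed dynamical system. -/
def ZeroGluing (G : Type) [Group G] {X : Type} [MetricSpace X] [MulAction G X]
    (x₀ : X) : Prop :=
  ∀ ε : ℝ, 0 < ε → ∃ δ : ℝ, 0 < δ ∧ ∃ E : Finset G,
    ∀ (I : Type) (A : I → Set G) (p : I → X),
      (∀ g : G, ∃! i : I, g ∈ A i) →
      (∀ i : I, ∀ g ∈ A i, (∃ e ∈ E, e * g ∉ A i) → dist (g • p i) x₀ < δ) →
      ∃ y : X, ∀ i : I, ∀ g ∈ A i, dist (g • y) (g • p i) < ε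

/-- A group `G` is nil-rigid if for every expansive `0`-gluing pointed dynamical
system `(G, X, 0)` with dense homoclinic points, every asymptotically nilpotent
endomorphism is nilpotent. -/
def NilRigid (G : Type) [Group G] : Prop :=
  ∀ (X : Type) (_ : MetricSpace X) (_ : CompactSpace X) (_ : MulAction G X),
    (∀ g : G, Continuous fun x : X => g • x) →
    ∀ x₀ : X, (∀ g : G, g • x₀ = x₀) →
    (∃ Δ : ℝ, 0 < Δ ∧ ∀ x y : X, (∀ g : G, dist (g • x) (g • y) ≤ Δ) → x = y) →
    ZeroGluing G x₀ →
    Dense {x : X | Homoclinic G x₀ x} →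
    ∀ f : X → X, Continuous f → f x₀ = x₀ →
    (∀ (g : G) (x : X), f (g • x) = g • f x) →
    (∀ x : X, Filter.Tendsto (fun n => f^[n] x) Filter.atTop (nhds x₀)) →
    ∃ n : ℕ, ∀ x : X, f^[n] x = x₀

/-!
Gluing at the single scale `Δ / 2`, where `Δ` is an expansivity constant, involves a finite memory
set `E ⊆ G`, and the endomorphism `f` is determined up to `Δ / 2` by a finite window `F ⊆ G`.
Let `H` be a nil-rigid subgroup containing `E ∪ F`, and let `Y` be the closed `H`-invariant set of
the points whose orbit stays within `Δ / 2` of `x₀` outside `H`.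

Since two points of `Y` are never more than `Δ` apart outside `H`, the action of `H` on `Y` is
expansive. The `E`-borders of `H` and of its complement are empty, so every designation of `H`
extends by `x₀` to one of `G`, and its realizations lie in `Y`; with expansivity this makes
`(H, Y, x₀)` a `0`-gluing system with dense homoclinic points. As `F ⊆ H`, the map `f` preserves
`Y`, so `f^[n]` vanishes on `Y` for some `n`. Finally every `x ∈ X` is shadowed along `H` by some
`y ∈ Y`, hence so is `f^[n] x` by `f^[n] y = x₀`. Thus `f^[n]` maps `X` into the `Δ`-ball around
`x₀`, and by expansivity to `x₀`.
-/

open Filter Topology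

section Expansivity

/-- The defining condition of an expansivity constant `Δ` for the action of `G` on `X`; positivity
of `Δ` is not part of the predicate. -/
def IsExpansivityConstant (G X : Type*) [SMul G X] [PseudoMetricSpace X] (Δ : ℝ) : Prop :=
  ∀ x y : X, (∀ g : G, dist (g • x) (g • y) ≤ Δ) → x = y

theorem IsExpansivityConstant.exists_finset_dist_lt {G X : Type*} [SMul G X]
    [PseudoMetricSpace X] [CompactSpace X] [ContinuousConstSMul G X] {Δ : ℝ}
    (hexp : IsExpansivityConstant G X Δ) {ε : ℝ} (hε : 0 < ε) :
    ∃ F : Finset G, ∀ x y : X, (∀ g ∈ F, dist (g • x) (g • y) ≤ Δ) → dist x y < ε := by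
  have isCompact_far : IsCompact {q : X × X | ε ≤ dist q.1 q.2} :=
    (isClosed_le continuous_const continuous_dist).isCompact
  obtain ⟨F, hF⟩ := isCompact_far.elim_finite_subfamily_closed
    (fun g : G ↦ {q : X × X | dist (g • q.1) (g • q.2) ≤ Δ})
    (fun g ↦ isClosed_le ((continuous_fst.const_smul g).dist (continuous_snd.const_smul g))
      continuous_const)
    (Set.eq_empty_of_forall_notMem fun q ⟨hfar, hclose⟩ ↦ by
      have heq : q.1 = q.2 := hexp _ _ fun g ↦ Set.mem_iInter.1 hclose g
      rw [Set.mem_ofPred_eq, heq, dist_self] at hfar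
      exact hε.not_ge hfar)
  refine ⟨F, fun x y hxy ↦ not_le.1 fun hfar ↦ ?_⟩
  exact (hF.le ⟨hfar, Set.mem_iInter₂.2 hxy⟩ : (x, y) ∈ (∅ : Set (X × X)))

theorem IsExpansivityConstant.exists_finset_dist_map_lt {G X Z : Type*} [SMul G X]
    [PseudoMetricSpace X] [CompactSpace X] [ContinuousConstSMul G X] [PseudoMetricSpace Z] {Δ : ℝ}
    (hexp : IsExpansivityConstant G X Δ) {f : X → Z} (hf : Continuous f) {ε : ℝ} (hε : 0 < ε) :
    ∃ F : Finset G, ∀ x y : X,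
      (∀ g ∈ F, dist (g • x) (g • y) ≤ Δ) → dist (f x) (f y) < ε := by
  obtain ⟨η, hη, hfη⟩ := Metric.uniformContinuous_iff.1
    (CompactSpace.uniformContinuous_of_continuous hf) ε hε
  obtain ⟨F, hF⟩ := hexp.exists_finset_dist_lt hη
  exact ⟨F, fun x y hxy ↦ hfη (hF x y hxy)⟩

theorem dist_smul_iterate_le {K X : Type*} [Monoid K] [PseudoMetricSpace X] [MulAction K X] {Δ : ℝ}
    {f : X → X} (hequiv : ∀ (k : K) (x : X), f (k • x) = k • f x)
    (hwindow : ∀ x y : X, (∀ k : K, dist (k • x) (k • y) ≤ Δ) → dist (f x) (f y) ≤ Δ)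
    {x y : X} (hxy : ∀ k : K, dist (k • x) (k • y) ≤ Δ) (n : ℕ) (k : K) :
    dist (k • f^[n] x) (k • f^[n] y) ≤ Δ := by
  induction n generalizing k with
  | zero => exact hxy k
  | succ n ih =>
    rw [Function.iterate_succ_apply', Function.iterate_succ_apply', ← hequiv, ← hequiv]
    refine hwindow _ _ fun l ↦ ?_
    rw [← mul_smul, ← mul_smul]
    exact ih (l * k)

theorem IsExpansivityConstant.iterate_eq_of_dist_le {G X : Type*} [SMul G X] [PseudoMetricSpace X]
    {x₀ : X} {Δ : ℝ} {f : X → X} (hexp : IsExpansivityConstant G X Δ)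
    (hx₀ : ∀ g : G, g • x₀ = x₀) (hequiv : ∀ (g : G) (x : X), f (g • x) = g • f x) {n : ℕ}
    (hn : ∀ x, dist (f^[n] x) x₀ ≤ Δ) (x : X) : f^[n] x = x₀ := by
  refine hexp _ _ fun g ↦ ?_
  have hcomm : f^[n] (g • x) = g • f^[n] x :=
    Function.Commute.iterate_left (g := (g • ·)) (hequiv g) n x
  rw [hx₀, ← hcomm]
  exact hn _

end Expansivity

section Homoclinic

theorem homoclinic_iff_tendsto {G X : Type} [Group G] [MetricSpace X] [MulAction G X]
    {x₀ x : X} : Homoclinic G x₀ x ↔ Tendsto (fun g : G ↦ g • x) cofinite (𝓝 x₀) := by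
  simp only [Homoclinic, Metric.tendsto_nhds, eventually_cofinite]
  refine forall₂_congr fun ε _ ↦ ⟨fun ⟨E, hE⟩ ↦ ?_, fun hfin ↦ ?_⟩
  · exact E.finite_toSet.subset fun g hg ↦ by_contra fun hgE ↦ hg (hE g hgE)
  · exact ⟨hfin.toFinset, fun g hg ↦ by simpa using hg⟩

theorem IsExpansivityConstant.homoclinic_of_eventually_dist_le {G X : Type} [Group G]
    [MetricSpace X] [CompactSpace X] [MulAction G X] [ContinuousConstSMul G X] {Δ : ℝ}
    (hexp : IsExpansivityConstant G X Δ) {x₀ x : X} (hx₀ : ∀ g : G, g • x₀ = x₀)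
    (hx : ∀ᶠ g : G in cofinite, dist (g • x) x₀ ≤ Δ) : Homoclinic G x₀ x := by
  rw [homoclinic_iff_tendsto, Metric.tendsto_nhds]
  intro ε hε
  obtain ⟨F, hF⟩ := hexp.exists_finset_dist_lt hε
  have hFx : ∀ᶠ g : G in cofinite, ∀ e ∈ F, dist ((e * g) • x) x₀ ≤ Δ :=
    (eventually_all_finset F).2 fun e _ ↦ (mul_right_injective e).tendsto_cofinite.eventually hx
  filter_upwards [hFx] with g hg
  refine hF _ _ fun e he ↦ ?_
  rw [hx₀, ← mul_smul]
  exact hg e he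

end Homoclinic

section Designations

/-- A `(δ, E)`-designation of `G` in `X`, with cells `A i` and points `p i`. Unlike a partition, the
family `A` may have empty cells. -/
structure IsDesignation {G X I : Type*} [Group G] [PseudoMetricSpace X] [SMul G X] (x₀ : X) (δ : ℝ)
    (E : Set G) (A : I → Set G) (p : I → X) : Prop where
  existsUnique_mem : ∀ g : G, ∃! i : I, g ∈ A i
  dist_lt_of_mem_border : ∀ i, ∀ g ∈ A i, (∃ e ∈ E, e * g ∉ A i) → dist (g • p i) x₀ < δ

/-- `y` is an `ε`-realization of the designation with cells `A i` and points `p i`. -/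
def IsRealization {G X I : Type*} [PseudoMetricSpace X] [SMul G X] (ε : ℝ) (A : I → Set G)
    (p : I → X) (y : X) : Prop :=
  ∀ i, ∀ g ∈ A i, dist (g • y) (g • p i) < ε

/-- Gluing at the single scale `ε`, with fixed parameters `δ` and `E`: every `(δ, E)`-designation
has an `ε`-realization. As in `ZeroGluing`, the index types are in `Type`. -/
def GluesWith {G X : Type*} [Group G] [PseudoMetricSpace X] [SMul G X] (x₀ : X) (ε δ : ℝ)
    (E : Set G) : Prop :=
  ∀ (I : Type) (A : I → Set G) (p : I → X), IsDesignation x₀ δ E A p → ∃ y, IsRealization ε A p y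

theorem zeroGluing_iff_forall_gluesWith {G X : Type} [Group G] [MetricSpace X] [MulAction G X]
    {x₀ : X} :
    ZeroGluing G x₀ ↔ ∀ ε : ℝ, 0 < ε → ∃ δ : ℝ, 0 < δ ∧ ∃ E : Finset G,
      GluesWith x₀ ε δ (E : Set G) :=
  forall₂_congr fun _ _ ↦ exists_congr fun _ ↦ and_congr_right fun _ ↦ exists_congr fun _ ↦
    forall₃_congr fun _ _ _ ↦
      ⟨fun h hd ↦ h hd.existsUnique_mem hd.dist_lt_of_mem_border, fun h hA hp ↦ h ⟨hA, hp⟩⟩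

variable {G X I : Type*} [Group G] [PseudoMetricSpace X] {x₀ : X} {δ ε : ℝ} {E : Set G}
  {A : I → Set G} {p : I → X} {y : X}

theorem IsDesignation.mono [SMul G X] {δ' : ℝ} {E' : Set G} (hd : IsDesignation x₀ δ E A p)
    (hδ : δ ≤ δ') (hE : E' ⊆ E) : IsDesignation x₀ δ' E' A p where
  existsUnique_mem := hd.existsUnique_mem
  dist_lt_of_mem_border i g hg := fun ⟨e, he, heg⟩ ↦
    (hd.dist_lt_of_mem_border i g hg ⟨e, hE he, heg⟩).trans_le hδ

theorem IsDesignation.dist_mul_smul_lt [MulAction G X] {η : ℝ} {e g : G} {i : I}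
    (hd : IsDesignation x₀ δ E A p) (hy : IsRealization ε A p y) (hδ : 0 < δ)
    (he : e ∈ E) (he_inv : e⁻¹ ∈ E) (hη : ∀ a : X, dist a x₀ < δ → dist (e • a) x₀ < η)
    (hg : g ∈ A i) :
    dist ((e * g) • y) ((e * g) • p i) < ε + δ + η := by
  by_cases heg : e * g ∈ A i
  · have hη₀ : 0 < η := dist_nonneg.trans_lt (hη x₀ (by rwa [dist_self]))
    linarith [hy i _ heg]
  · obtain ⟨j, hj, -⟩ := hd.existsUnique_mem (e * g)
    have hgj : g ∉ A j := fun hgj ↦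
      heg ((hd.existsUnique_mem g).unique hgj hg ▸ hj)
    have hpj : dist ((e * g) • p j) x₀ < δ :=
      hd.dist_lt_of_mem_border j _ hj ⟨e⁻¹, he_inv, by rwa [inv_mul_cancel_left]⟩
    have hpi : dist ((e * g) • p i) x₀ < η := by
      rw [mul_smul]
      exact hη _ (hd.dist_lt_of_mem_border i g hg ⟨e, he, heg⟩)
    calc dist ((e * g) • y) ((e * g) • p i)
        ≤ dist ((e * g) • y) ((e * g) • p j) + dist ((e * g) • p j) x₀
            + dist x₀ ((e * g) • p i) := dist_triangle4 ..
      _ < ε + δ + η := by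
        rw [dist_comm x₀]
        gcongr
        exact hy j _ hj

end Designations

theorem eventually_forall_finset_dist_smul_lt {G X : Type*} [PseudoMetricSpace X] [SMul G X]
    [ContinuousConstSMul G X] (F : Finset G) (x : X) {η : ℝ} (hη : 0 < η) :
    ∀ᶠ a in 𝓝 x, ∀ e ∈ F, dist (e • a) (e • x) < η :=
  (eventually_all_finset F).2 fun e _ ↦
    (continuous_const_smul e).continuousAt.eventually (Metric.ball_mem_nhds _ hη)

/-- A realization at scale `ε < Δ` is accurate to within `Δ` along translates by a finite set, as
soon as that set is added to the memory; uniform expansivity turns this into any prescribed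
accuracy. -/
theorem GluesWith.zeroGluing {G X : Type} [Group G] [MetricSpace X] [CompactSpace X]
    [MulAction G X] [ContinuousConstSMul G X] {x₀ : X} {Δ ε δ : ℝ} {E : Finset G}
    (hglue : GluesWith x₀ ε δ (E : Set G)) (hδ : 0 < δ) (hx₀ : ∀ g : G, g • x₀ = x₀)
    (hexp : IsExpansivityConstant G X Δ) (hε : ε < Δ) : ZeroGluing G x₀ := by
  classical
  rw [zeroGluing_iff_forall_gluesWith]
  intro ε' hε'
  obtain ⟨F, hF⟩ := hexp.exists_finset_dist_lt hε'
  obtain ⟨η, hη, rfl⟩ : ∃ η, 0 < η ∧ ε + η + η = Δ := ⟨(Δ - ε) / 2, by linarith, by ring⟩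
  obtain ⟨δ₁, hδ₁, hFδ₁⟩ :=
    Metric.eventually_nhds_iff.1 (eventually_forall_finset_dist_smul_lt F x₀ hη)
  refine ⟨min δ (min δ₁ η), by positivity, E ∪ F ∪ F.image (·⁻¹), fun I A p hd ↦ ?_⟩
  obtain ⟨y, hy⟩ := hglue I A p (hd.mono (min_le_left _ _) (by
    exact_mod_cast Finset.subset_union_left.trans Finset.subset_union_left))
  refine ⟨y, fun i g hg ↦ hF _ _ fun e he ↦ ?_⟩
  have hd₁ := hd.mono (min_le_right _ _) subset_rfl
  have hclose : dist ((e * g) • y) ((e * g) • p i) < ε + min δ₁ η + η :=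
    hd₁.dist_mul_smul_lt hy (by positivity) (by simp [he]) (by simp [he])
      (fun a ha ↦ hx₀ e ▸ hFδ₁ (ha.trans_le (min_le_left _ _)) e he) hg
  rw [← mul_smul, ← mul_smul]
  linarith [min_le_right δ₁ η]

section Truncation

variable {G X : Type*} [Group G] [PseudoMetricSpace X] [MulAction G X] {H : Subgroup G} {x₀ : X}
  {r : ℝ}

/-- The `H`-subsystem of the points whose orbit stays within distance `r` of `x₀` outside `H`. -/
def truncation (H : Subgroup G) (x₀ : X) (r : ℝ) : SubMulAction H X where
  carrier := {x | ∀ g ∉ H, dist (g • x) x₀ ≤ r}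
  smul_mem' h x hx g hg := by
    rw [Subgroup.smul_def, ← mul_smul]
    exact hx _ ((H.mul_mem_cancel_right h.2).not.2 hg)

theorem mem_truncation {x : X} : x ∈ truncation H x₀ r ↔ ∀ g ∉ H, dist (g • x) x₀ ≤ r :=
  Iff.rfl

theorem self_mem_truncation (hx₀ : ∀ g : G, g • x₀ = x₀) (hr : 0 ≤ r) :
    x₀ ∈ truncation H x₀ r :=
  fun g _ ↦ by rwa [hx₀, dist_self]

theorem isClosed_truncation [ContinuousConstSMul G X] :
    IsClosed (truncation H x₀ r : Set X) := by
  simp only [← SetLike.setOfPred_mem_eq, mem_truncation, Set.ofPred_forall]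
  exact isClosed_iInter fun g ↦ isClosed_iInter fun _ ↦
    isClosed_le ((continuous_const_smul g).dist continuous_const) continuous_const

theorem isExpansivityConstant_truncation {Δ : ℝ} (hexp : IsExpansivityConstant G X Δ)
    (hr : r + r ≤ Δ) : IsExpansivityConstant H (truncation H x₀ r) Δ := by
  refine fun x y hxy ↦ Subtype.ext (hexp _ _ fun g ↦ ?_)
  by_cases hg : g ∈ H
  · exact hxy ⟨g, hg⟩
  · calc dist (g • (x : X)) (g • (y : X))
        ≤ dist (g • (x : X)) x₀ + dist (g • (y : X)) x₀ := dist_triangle_right ..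
      _ ≤ r + r := add_le_add (x.2 g hg) (y.2 g hg)
      _ ≤ Δ := hr

theorem mapsTo_truncation {Δ : ℝ} {f : X → X} (hx₀ : ∀ g : G, g • x₀ = x₀) (hfx₀ : f x₀ = x₀)
    (hequiv : ∀ (g : G) (x : X), f (g • x) = g • f x)
    (hwindow : ∀ x y : X, (∀ h : H, dist (h • x) (h • y) ≤ Δ) → dist (f x) (f y) ≤ r)
    (hr : r ≤ Δ) :
    Set.MapsTo f (truncation H x₀ r) (truncation H x₀ r) := by
  intro x hx g hg
  have hgx : dist (f (g • x)) (f x₀) ≤ r := hwindow _ _ fun h ↦ by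
    rw [Subgroup.smul_def, Subgroup.smul_def, hx₀, ← mul_smul]
    exact (hx _ ((H.mul_mem_cancel_left h.2).not.2 hg)).trans hr
  rwa [hequiv, hfx₀] at hgx

instance [CompactSpace X] [ContinuousConstSMul G X] : CompactSpace (truncation H x₀ r) :=
  isCompact_iff_compactSpace.1 isClosed_truncation.isCompact

instance [ContinuousConstSMul G X] : ContinuousConstSMul H (truncation H x₀ r) :=
  ⟨fun h ↦ (continuous_subtype_val.const_smul (h : G)).subtype_mk _⟩

variable {δ : ℝ} {E : Set G}

theorem IsDesignation.extend {I : Type*} {A : I → Set H} {p : I → X}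
    (hd : IsDesignation x₀ δ ((↑) ⁻¹' E : Set H) A p) (hE : E ⊆ H) :
    IsDesignation x₀ δ E (fun o : Option I ↦ o.elim (H : Set G)ᶜ fun i ↦ (↑) '' A i)
      (fun o ↦ o.elim x₀ p) where
  existsUnique_mem g := by
    by_cases hg : g ∈ H
    · obtain ⟨i, hi, hi_unique⟩ := hd.existsUnique_mem ⟨g, hg⟩
      refine ⟨some i, ⟨_, hi, rfl⟩, ?_⟩
      rintro (_ | j) hj
      · exact absurd hg hj
      · obtain ⟨_, hj, rfl⟩ := hj
        exact congrArg some (hi_unique j hj)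
    · refine ⟨none, hg, ?_⟩
      rintro (_ | j) hj
      · rfl
      · obtain ⟨k, -, rfl⟩ := hj
        exact absurd k.2 hg
  dist_lt_of_mem_border := by
    rintro (_ | i) g hg ⟨e, he, heg⟩
    · exact absurd ((H.mul_mem_cancel_left (hE he)).not.2 hg) heg
    · obtain ⟨k, hk, rfl⟩ := hg
      exact hd.dist_lt_of_mem_border i k hk ⟨⟨e, hE he⟩, he, fun hek ↦ heg ⟨_, hek, rfl⟩⟩

theorem GluesWith.exists_mem_truncation {I : Type} {A : I → Set H} {p : I → X}
    (hglue : GluesWith x₀ r δ E) (hx₀ : ∀ g : G, g • x₀ = x₀) (hE : E ⊆ H)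
    (hd : IsDesignation x₀ δ ((↑) ⁻¹' E : Set H) A p) :
    ∃ y ∈ truncation H x₀ r, IsRealization r A p y := by
  obtain ⟨y, hy⟩ := hglue _ _ _ (hd.extend hE)
  refine ⟨y, fun g hg ↦ ?_, fun i h hh ↦ hy (some i) h ⟨h, hh, rfl⟩⟩
  have hgy : dist (g • y) (g • x₀) < r := hy none g hg
  rw [hx₀] at hgy
  exact hgy.le

theorem gluesWith_truncation (hglue : GluesWith x₀ r δ E) (hx₀ : ∀ g : G, g • x₀ = x₀)
    (hE : E ⊆ H) (hmem : x₀ ∈ truncation H x₀ r) :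
    GluesWith (⟨x₀, hmem⟩ : truncation H x₀ r) r δ ((↑) ⁻¹' E : Set H) := by
  intro I A p hd
  obtain ⟨y, hyY, hy⟩ := hglue.exists_mem_truncation (p := fun i ↦ (p i : X)) hx₀ hE
    ⟨hd.existsUnique_mem, hd.dist_lt_of_mem_border⟩
  exact ⟨⟨y, hyY⟩, hy⟩

theorem GluesWith.exists_mem_truncation_dist_smul_lt (hglue : GluesWith x₀ r δ E)
    (hx₀ : ∀ g : G, g • x₀ = x₀) (hE : E ⊆ H) (x : X) :
    ∃ y ∈ truncation H x₀ r, ∀ h : H, dist (h • y) (h • x) < r := by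
  have hd : IsDesignation x₀ δ ((↑) ⁻¹' E : Set H) (fun _ : Unit ↦ Set.univ) (fun _ ↦ x) :=
    ⟨fun _ ↦ ⟨(), trivial, fun _ _ ↦ rfl⟩, fun _ _ _ ⟨_, _, h_not_univ⟩ ↦ absurd trivial h_not_univ⟩
  obtain ⟨y, hyY, hy⟩ := hglue.exists_mem_truncation hx₀ hE hd
  exact ⟨y, hyY, fun h ↦ hy () h trivial⟩

end Truncation

section TruncatedSystem

variable {G X : Type} [Group G] [MetricSpace X] [CompactSpace X] [MulAction G X]
  [ContinuousConstSMul G X] {H : Subgroup G} {x₀ : X} {Δ r δ : ℝ}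

theorem zeroGluing_truncation {E : Finset G} (hx₀ : ∀ g : G, g • x₀ = x₀)
    (hexp : IsExpansivityConstant G X Δ) (hr : 0 < r) (hrΔ : r + r ≤ Δ)
    (hglue : GluesWith x₀ r δ (E : Set G)) (hδ : 0 < δ) (hE : (E : Set G) ⊆ H)
    (hmem : x₀ ∈ truncation H x₀ r) :
    ZeroGluing H (⟨x₀, hmem⟩ : truncation H x₀ r) := by
  have hglueY : GluesWith (⟨x₀, hmem⟩ : truncation H x₀ r) r δ
      (E.preimage ((↑) : H → G) Subtype.val_injective.injOn : Set H) := by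
    rw [Finset.coe_preimage]
    exact gluesWith_truncation hglue hx₀ hE hmem
  exact hglueY.zeroGluing hδ (fun h ↦ Subtype.ext (hx₀ h))
    (isExpansivityConstant_truncation hexp hrΔ) (by linarith)

theorem dense_homoclinic_truncation {E : Set G} (hx₀ : ∀ g : G, g • x₀ = x₀)
    (hexp : IsExpansivityConstant G X Δ) (hr : 0 < r) (hrΔ : r + r ≤ Δ)
    (hglue : GluesWith x₀ r δ E) (hE : E ⊆ H) (hdense : Dense {x : X | Homoclinic G x₀ x})
    (hmem : x₀ ∈ truncation H x₀ r) :
    Dense {y : truncation H x₀ r | Homoclinic H ⟨x₀, hmem⟩ y} := by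
  classical
  have hexpY := isExpansivityConstant_truncation (H := H) (x₀ := x₀) hexp hrΔ
  rw [Metric.dense_iff]
  intro x η hη
  obtain ⟨F, hF⟩ := hexpY.exists_finset_dist_lt hη
  obtain ⟨z, hzx, hz⟩ := mem_closure_iff_nhds.1 (hdense x.1) _
    (eventually_forall_finset_dist_smul_lt (F.image Subtype.val) x.1 hr)
  obtain ⟨y, hyY, hyz⟩ := hglue.exists_mem_truncation_dist_smul_lt hx₀ hE z
  refine ⟨⟨y, hyY⟩, hF _ _ fun e he ↦ ?_, ?_⟩
  · calc dist (e • y) (e • (x : X))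
        ≤ dist (e • y) (e • z) + dist (e • z) (e • (x : X)) := dist_triangle ..
      _ ≤ r + r := add_le_add (hyz e).le (hzx e (Finset.mem_image_of_mem _ he)).le
      _ ≤ Δ := hrΔ
  · have hzH : ∀ᶠ h : H in cofinite, dist (h • z) x₀ < r :=
      ((homoclinic_iff_tendsto.1 hz).comp Subtype.val_injective.tendsto_cofinite).eventually
        (Metric.ball_mem_nhds _ hr)
    refine hexpY.homoclinic_of_eventually_dist_le (fun h ↦ Subtype.ext (hx₀ h)) ?_
    filter_upwards [hzH] with h hh
    calc dist (h • y) x₀ ≤ dist (h • y) (h • z) + dist (h • z) x₀ := dist_triangle ..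
      _ ≤ r + r := add_le_add (hyz h).le hh.le
      _ ≤ Δ := hrΔ

end TruncatedSystem

theorem NilRigid.exists_iterate_eq_of_mapsTo {K X : Type} [Group K] [MetricSpace X]
    [MulAction K X] (hK : NilRigid K) (Y : SubMulAction K X) [CompactSpace Y]
    [ContinuousConstSMul K Y] {x₀ : X} {Δ : ℝ} {f : X → X} (hmem : x₀ ∈ Y)
    (hx₀ : ∀ k : K, k • x₀ = x₀) (hΔ : 0 < Δ) (hexp : IsExpansivityConstant K Y Δ)
    (hglue : ZeroGluing K (⟨x₀, hmem⟩ : Y))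
    (hdense : Dense {y : Y | Homoclinic K ⟨x₀, hmem⟩ y})
    (hf : Continuous f) (hfx₀ : f x₀ = x₀) (hequiv : ∀ (k : K) (x : X), f (k • x) = k • f x)
    (hfY : Set.MapsTo f Y Y) (hlim : ∀ x ∈ Y, Tendsto (fun n ↦ f^[n] x) atTop (𝓝 x₀)) :
    ∃ n : ℕ, ∀ x ∈ Y, f^[n] x = x₀ := by
  have hiter (n : ℕ) (y : Y) : ((hfY.restrict f Y Y)^[n] y : X) = f^[n] y :=
    hfY.coe_iterate_restrict y n
  obtain ⟨n, hn⟩ := hK Y inferInstance inferInstance inferInstance continuous_const_smul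
    ⟨x₀, hmem⟩ (fun k ↦ Subtype.ext (hx₀ k)) ⟨Δ, hΔ, hexp⟩ hglue hdense (hfY.restrict f Y Y)
    (hf.restrict hfY) (Subtype.ext hfx₀) (fun k y ↦ Subtype.ext (hequiv k y))
    (fun y ↦ tendsto_subtype_rng.2 (by simpa only [hiter] using hlim y y.2))
  exact ⟨n, fun x hx ↦ by rw [← hiter n ⟨x, hx⟩, hn]⟩

theorem IsExpansivityConstant.iterate_eq_of_forall_mem_truncation {G X : Type*} [Group G]
    [PseudoMetricSpace X] [MulAction G X] {H : Subgroup G} {x₀ : X} {Δ r δ : ℝ} {f : X → X}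
    {E : Set G} (hexp : IsExpansivityConstant G X Δ) (hx₀ : ∀ g : G, g • x₀ = x₀) (hrΔ : r ≤ Δ)
    (hglue : GluesWith x₀ r δ E) (hE : E ⊆ H)
    (hequiv : ∀ (g : G) (x : X), f (g • x) = g • f x)
    (hwindow : ∀ x y : X, (∀ h : H, dist (h • x) (h • y) ≤ Δ) → dist (f x) (f y) ≤ Δ)
    {n : ℕ} (hn : ∀ y ∈ truncation H x₀ r, f^[n] y = x₀) (x : X) : f^[n] x = x₀ := by
  refine hexp.iterate_eq_of_dist_le hx₀ hequiv (fun x ↦ ?_) x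
  obtain ⟨y, hyY, hyx⟩ := hglue.exists_mem_truncation_dist_smul_lt hx₀ hE x
  have hshadow : dist ((1 : H) • f^[n] y) ((1 : H) • f^[n] x) ≤ Δ :=
    dist_smul_iterate_le (K := H) (fun h ↦ hequiv h) hwindow (fun h ↦ (hyx h).le.trans hrΔ) n 1
  rwa [one_smul, one_smul, hn y hyY, dist_comm] at hshadow

theorem statement18_general {G : Type} [Group G]
    (h : ∀ S : Finset G, ∃ H : Subgroup G, (S : Set G) ⊆ H ∧ NilRigid H) : NilRigid G := by
  classical
  rintro X _ _ _ hcont x₀ hx₀ ⟨Δ, hΔ, hexp : IsExpansivityConstant G X Δ⟩ hglue hdense f hf hfx₀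
    hequiv hlim
  have : ContinuousConstSMul G X := ⟨hcont⟩
  have hr : 0 < Δ / 2 := half_pos hΔ
  have hrΔ : Δ / 2 ≤ Δ := half_le_self hΔ.le
  obtain ⟨δ, hδ, E, hE⟩ := zeroGluing_iff_forall_gluesWith.1 hglue (Δ / 2) hr
  obtain ⟨F, hF⟩ := hexp.exists_finset_dist_map_lt hf hr
  obtain ⟨H, hEFH, hH⟩ := h (E ∪ F)
  obtain ⟨hEH, hFH⟩ : (E : Set G) ⊆ H ∧ (F : Set G) ⊆ H := by
    rwa [Finset.coe_union, Set.union_subset_iff] at hEFH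
  have hwindow (x y : X) (hxy : ∀ h : H, dist (h • x) (h • y) ≤ Δ) : dist (f x) (f y) ≤ Δ / 2 :=
    (hF x y fun g hg ↦ hxy ⟨g, hFH hg⟩).le
  have hmem : x₀ ∈ truncation H x₀ (Δ / 2) := self_mem_truncation hx₀ hr.le
  obtain ⟨n, hn⟩ := hH.exists_iterate_eq_of_mapsTo (truncation H x₀ (Δ / 2)) hmem
    (fun k ↦ hx₀ k) hΔ (isExpansivityConstant_truncation hexp (add_halves Δ).le)
    (zeroGluing_truncation hx₀ hexp hr (add_halves Δ).le hE hδ hEH hmem)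
    (dense_homoclinic_truncation hx₀ hexp hr (add_halves Δ).le hE hEH hdense hmem)
    hf hfx₀ (fun k ↦ hequiv k) (mapsTo_truncation hx₀ hfx₀ hequiv hwindow hrΔ)
    (fun x _ ↦ hlim x)
  exact ⟨n, hexp.iterate_eq_of_forall_mem_truncation hx₀ hrΔ hE hEH hequiv
    (fun x y hxy ↦ (hwindow x y hxy).trans hrΔ) hn⟩

/-- if every finitely generated subgroup of `G` is nil-rigid, then so
is `G`. -/
theorem statement18 {G : Type} [Group G]
    (h : ∀ H : Subgroup G, H.FG → NilRigid H) :
    NilRigid G :=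
  statement18_general fun S ↦
    ⟨Subgroup.closure S, Subgroup.subset_closure, h _ ⟨S, rfl⟩⟩
end
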